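/- Assume (H4.1) and (H4.2), and let K be a Lipschitz constant of f(t,x,·,·) in (y,z), uniform in (t,x,u,v). Let u₁ ∈ Θ be a viscosity subsolution and u₂ ∈ Θ a viscosity supersolution of the Isaacs equation ∂_t w + H⁻(t,x,w,Dw,D²w) = 0 on [0,T)×ℝⁿ with terminal condition w(T,x) = Φ(x). Then the function ω := u₁ − u₂ is a viscosity subsolution of the equation ∂_t ω(t,x) + sup_{u∈U, v∈V} { (1/2)·tr(σσᵀ(t,x,u,v)·D²ω) + Dω·b(t,x,u,v) + K|ω| + K|Dω·σ(t,x,u,v)| } = 0 on [0,T)×ℝⁿ with terminal condition ω(T,x) = 0, x ∈ ℝⁿ (here Dω·σ(t,x,u,v) ∈ ℝᵈ is the row vector (Dω)ᵀσ(t,x,u,v) and |·| its Euclidean norm). -/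

import Mathlib

noncomputable section

open scoped RealInnerProductSpace Matrix

attribute [local instance] Matrix.frobeniusNormedAddCommGroup

/-- The Euclidean state space `ℝⁿ`. -/
abbrev Eucl (n : ℕ) := EuclideanSpace ℝ (Fin n)

/-- Time derivative `∂φ/∂t (t,x)` of a function `φ : ℝ × ℝⁿ → ℝ`. -/
def timeDeriv {n : ℕ} (φ : ℝ → Eucl n → ℝ) (t : ℝ) (x : Eucl n) : ℝ :=
  deriv (fun s => φ s x) t

/-- Spatial gradient `Dφ(t,x) ∈ ℝⁿ`. -/
def spaceGrad {n : ℕ} (φ : ℝ → Eucl n → ℝ) (t : ℝ) (x : Eucl n) : Eucl n :=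
  gradient (fun y => φ t y) x

/-- Spatial Hessian `D²φ(t,x)` as an `n × n` matrix. -/
def spaceHess {n : ℕ} (φ : ℝ → Eucl n → ℝ) (t : ℝ) (x : Eucl n) :
    Matrix (Fin n) (Fin n) ℝ :=
  Matrix.of fun i j =>
    fderiv ℝ (fun y => fderiv ℝ (fun y' => φ t y') y (EuclideanSpace.single j (1 : ℝ))) x
      (EuclideanSpace.single i (1 : ℝ))

/-- The row vector `pᵀσ ∈ ℝᵈ`. -/
def rowMul {n d : ℕ} (p : Eucl n) (M : Matrix (Fin n) (Fin d) ℝ) : Eucl d :=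
  (WithLp.equiv 2 (Fin d → ℝ)).symm fun j => ∑ i, p i * M i j

/-- `φ ∈ C³_{l,b}([0,T]×ℝⁿ)`: three times continuously differentiable with all
derivatives of order 1 to 3 bounded. -/
def IsTestFunction {n : ℕ} (φ : ℝ → Eucl n → ℝ) : Prop :=
  ContDiff ℝ 3 (fun p : ℝ × Eucl n => φ p.1 p.2) ∧
  ∀ i : ℕ, 1 ≤ i → i ≤ 3 →
    ∃ M : ℝ, ∀ p : ℝ × Eucl n,
      ‖iteratedFDeriv ℝ i (fun q : ℝ × Eucl n => φ q.1 q.2) p‖ ≤ M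

/-- Viscosity subsolution of `∂_t w + G(t,x,w,Dw,D²w) = 0` on `[0,T)×ℝⁿ`
with terminal condition `w(T,·) = g`. -/
def IsViscositySubsolution {n : ℕ} (T : ℝ)
    (G : ℝ → Eucl n → ℝ → Eucl n → Matrix (Fin n) (Fin n) ℝ → ℝ)
    (g : Eucl n → ℝ) (w : ℝ → Eucl n → ℝ) : Prop :=
  (∀ x : Eucl n, w T x ≤ g x) ∧
  ∀ φ : ℝ → Eucl n → ℝ, IsTestFunction φ →
    ∀ t ∈ Set.Ico (0 : ℝ) T, ∀ x : Eucl n,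
      IsLocalMaxOn (fun p : ℝ × Eucl n => w p.1 p.2 - φ p.1 p.2)
        (Set.Icc (0 : ℝ) T ×ˢ (Set.univ : Set (Eucl n))) (t, x) →
      0 ≤ timeDeriv φ t x + G t x (φ t x) (spaceGrad φ t x) (spaceHess φ t x)

/-- Viscosity supersolution of `∂_t w + G(t,x,w,Dw,D²w) = 0` on `[0,T)×ℝⁿ`
with terminal condition `w(T,·) = g`. -/
def IsViscositySupersolution {n : ℕ} (T : ℝ)
    (G : ℝ → Eucl n → ℝ → Eucl n → Matrix (Fin n) (Fin n) ℝ → ℝ)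
    (g : Eucl n → ℝ) (w : ℝ → Eucl n → ℝ) : Prop :=
  (∀ x : Eucl n, g x ≤ w T x) ∧
  ∀ φ : ℝ → Eucl n → ℝ, IsTestFunction φ →
    ∀ t ∈ Set.Ico (0 : ℝ) T, ∀ x : Eucl n,
      IsLocalMinOn (fun p : ℝ × Eucl n => w p.1 p.2 - φ p.1 p.2)
        (Set.Icc (0 : ℝ) T ×ˢ (Set.univ : Set (Eucl n))) (t, x) →
      timeDeriv φ t x + G t x (φ t x) (spaceGrad φ t x) (spaceHess φ t x) ≤ 0

/-- Viscosity solution: both a sub- and a supersolution. -/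
def IsViscositySolution {n : ℕ} (T : ℝ)
    (G : ℝ → Eucl n → ℝ → Eucl n → Matrix (Fin n) (Fin n) ℝ → ℝ)
    (g : Eucl n → ℝ) (w : ℝ → Eucl n → ℝ) : Prop :=
  IsViscositySubsolution T G g w ∧ IsViscositySupersolution T G g w

/-- The lower Hamiltonian `H⁻`. -/
def lowerHamiltonian {n d : ℕ} {U V : Type*}
    (b : ℝ → Eucl n → U → V → Eucl n)
    (σ : ℝ → Eucl n → U → V → Matrix (Fin n) (Fin d) ℝ)
    (f : ℝ → Eucl n → ℝ → Eucl d → U → V → ℝ)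
    (t : ℝ) (x : Eucl n) (y : ℝ) (p : Eucl n) (X : Matrix (Fin n) (Fin n) ℝ) : ℝ :=
  ⨆ u : U, ⨅ v : V,
    (1 / 2) * Matrix.trace (σ t x u v * (σ t x u v)ᵀ * X)
      + ⟪p, b t x u v⟫
      + f t x y (rowMul p (σ t x u v)) u v

/-- The upper Hamiltonian `H⁺`. -/
def upperHamiltonian {n d : ℕ} {U V : Type*}
    (b : ℝ → Eucl n → U → V → Eucl n)
    (σ : ℝ → Eucl n → U → V → Matrix (Fin n) (Fin d) ℝ)
    (f : ℝ → Eucl n → ℝ → Eucl d → U → V → ℝ)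
    (t : ℝ) (x : Eucl n) (y : ℝ) (p : Eucl n) (X : Matrix (Fin n) (Fin n) ℝ) : ℝ :=
  ⨅ v : V, ⨆ u : U,
    (1 / 2) * Matrix.trace (σ t x u v * (σ t x u v)ᵀ * X)
      + ⟪p, b t x u v⟫
      + f t x y (rowMul p (σ t x u v)) u v

/-- Membership in the class `Θ` of continuous functions on `[0,T]×ℝⁿ` satisfying the
growth condition `φ(t,x)·exp{−Ã[log((|x|²+1)^{1/2})]²} → 0` as `|x| → ∞`,
uniformly in `t ∈ [0,T]`. -/
def MemTheta {n : ℕ} (T : ℝ) (φ : ℝ → Eucl n → ℝ) : Prop :=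
  ContinuousOn (fun p : ℝ × Eucl n => φ p.1 p.2)
      (Set.Icc (0 : ℝ) T ×ˢ (Set.univ : Set (Eucl n))) ∧
  ∃ A : ℝ, 0 < A ∧ ∀ ε > (0 : ℝ), ∃ R : ℝ, ∀ t ∈ Set.Icc (0 : ℝ) T, ∀ x : Eucl n,
    R ≤ ‖x‖ →
      |φ t x| * Real.exp (-A * (Real.log ((‖x‖ ^ 2 + 1) ^ ((1 : ℝ) / 2))) ^ 2) ≤ ε

/-!
At a local maximum of `u₁ - u₂ - φ` the variables are doubled. `u₁ - φ` and `-u₂` are regularized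
by a sup-convolution followed by an inf-convolution (Lasry–Lions), which gives functions of class
`C^{1,1}`. The slopes of small linear perturbations are the image of the contact points under a
Lipschitz map, so the contact points have positive measure, and Rademacher's theorem applied to the
Lipschitz gradient yields a contact point of second order; this replaces Alexandrov's theorem and
Jensen's lemma.

The coefficients are only continuous in time. Therefore the space penalization `κ` is fixed first
and the time penalization afterwards, so large that the time increments of the coefficients are
negligible even after multiplication by `κ`.

A viscosity inequality contains the value `φ(t, x)` of the test function, which is not tied to the
value of the solution; subtracting a constant from the test functions makes it `0` for both
solutions, so that the running cost is compared at the common value `y = 0`.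
-/

open Filter Topology Set

section Regularization

variable {F : Type*} [NormedAddCommGroup F]

/-- The Moreau envelope of `w` with parameter `k`, i.e. its inf-convolution with `k/2 ‖·‖²`. -/
def moreauEnvelope (k : ℝ) (w : F → ℝ) (x : F) : ℝ :=
  ⨅ y, w y + k / 2 * ‖x - y‖ ^ 2

/-- The sup-convolution with `-l/2 ‖·‖²` of the restriction of `u` to `Q`. -/
def supConvolution (l : ℝ) (Q : Set F) (u : F → ℝ) (y : F) : ℝ :=
  ⨆ a : Q, u a - l / 2 * ‖(a : F) - y‖ ^ 2

/-- `P` selects minimizers in the definition of `moreauEnvelope k w`, and the minimized function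
grows quadratically away from them at rate `μ`. -/
def IsProximalMap (k μ : ℝ) (w : F → ℝ) (P : F → F) : Prop :=
  ∀ x y, w (P x) + k / 2 * ‖x - P x‖ ^ 2 + μ / 2 * ‖y - P x‖ ^ 2 ≤ w y + k / 2 * ‖x - y‖ ^ 2

/-- `h` is a two-sided regularization of `u` on `Q`: it lies above the sup-convolution of `u` with
parameter `m`, and below the inf-convolution with parameter `k` of the sup-convolution with the
smaller parameter `m k / (m + k)`. The Lasry–Lions regularization has this property. -/
structure IsRegularization (m k : ℝ) (Q : Set F) (u h : F → ℝ) : Prop where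
  le_add_sq : ∀ a ∈ Q, ∀ x, u a ≤ h x + m / 2 * ‖a - x‖ ^ 2
  exists_le : ∀ x y, ∃ a ∈ Q,
    h x ≤ u a - m * k / (m + k) / 2 * ‖a - y‖ ^ 2 + k / 2 * ‖x - y‖ ^ 2

namespace IsProximalMap

variable {w : F → ℝ} {k μ : ℝ} {P : F → F}

theorem moreauEnvelope_le (hP : IsProximalMap k μ w P) (hμ : 0 ≤ μ) (x y : F) :
    moreauEnvelope k w x ≤ w y + k / 2 * ‖x - y‖ ^ 2 := by
  refine ciInf_le ⟨w (P x) + k / 2 * ‖x - P x‖ ^ 2, ?_⟩ y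
  rintro _ ⟨z, rfl⟩
  exact (le_add_of_nonneg_right (by positivity)).trans (hP x z)

theorem moreauEnvelope_eq (hP : IsProximalMap k μ w P) (hμ : 0 ≤ μ) (x : F) :
    moreauEnvelope k w x = w (P x) + k / 2 * ‖x - P x‖ ^ 2 :=
  (hP.moreauEnvelope_le hμ x (P x)).antisymm <|
    le_ciInf fun z => (le_add_of_nonneg_right (by positivity)).trans (hP x z)

end IsProximalMap

section SupConvolution

variable {Q : Set F} {u : F → ℝ} (hQ : IsCompact Q) (hu : ContinuousOn u Q) (l : ℝ) (y : F)
include hQ hu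

theorem bddAbove_range_supConvolution :
    BddAbove (range fun a : Q => u a - l / 2 * ‖(a : F) - y‖ ^ 2) := by
  have hcont : ContinuousOn (fun a => u a - l / 2 * ‖a - y‖ ^ 2) Q := hu.sub (by fun_prop)
  have := hQ.bddAbove_image hcont
  rwa [image_eq_range] at this

theorem le_supConvolution {a : F} (ha : a ∈ Q) :
    u a ≤ supConvolution l Q u y + l / 2 * ‖a - y‖ ^ 2 :=
  sub_le_iff_le_add.1 (le_ciSup (bddAbove_range_supConvolution hQ hu l y) ⟨a, ha⟩)

theorem exists_supConvolution_eq (hne : Q.Nonempty) :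
    ∃ a ∈ Q, supConvolution l Q u y = u a - l / 2 * ‖a - y‖ ^ 2 := by
  have hcont : ContinuousOn (fun a => u a - l / 2 * ‖a - y‖ ^ 2) Q := hu.sub (by fun_prop)
  obtain ⟨a, ha, hmax⟩ := hQ.exists_isMaxOn hne hcont
  have : Nonempty Q := hne.to_subtype
  exact ⟨a, ha, (ciSup_le fun c => hmax c.2).antisymm
    (le_ciSup (bddAbove_range_supConvolution hQ hu l y) ⟨a, ha⟩)⟩

end SupConvolution

variable [InnerProductSpace ℝ F]

theorem mul_norm_add_sq_le {m k : ℝ} (hmk : 0 < m + k) (p q : F) :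
    m * k / (m + k) * ‖p + q‖ ^ 2 ≤ m * ‖p‖ ^ 2 + k * ‖q‖ ^ 2 := by
  have hdefect : m * ‖p‖ ^ 2 + k * ‖q‖ ^ 2 - m * k / (m + k) * ‖p + q‖ ^ 2 =
      ‖m • p - k • q‖ ^ 2 / (m + k) := by
    rw [norm_sub_sq_real, norm_add_sq_real, norm_smul, norm_smul, mul_pow, mul_pow,
      Real.norm_eq_abs, Real.norm_eq_abs, sq_abs, sq_abs, real_inner_smul_left,
      real_inner_smul_right]
    field_simp
    ring
  exact sub_nonneg.1 (hdefect ▸ by positivity)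

theorem exists_mul_norm_sub_sq_add_eq {m k : ℝ} (hmk : 0 < m + k) (a y : F) :
    ∃ x : F, m * ‖a - x‖ ^ 2 + k * ‖x - y‖ ^ 2 = m * k / (m + k) * ‖a - y‖ ^ 2 := by
  refine ⟨y + (m / (m + k)) • (a - y), ?_⟩
  have hax : a - (y + (m / (m + k)) • (a - y)) = (k / (m + k)) • (a - y) := by
    rw [show k / (m + k) = 1 - m / (m + k) by field_simp; ring]
    module
  rw [hax, add_sub_cancel_left, norm_smul, norm_smul, mul_pow, mul_pow, Real.norm_eq_abs,
    Real.norm_eq_abs, sq_abs, sq_abs]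
  field_simp
  ring

theorem add_sq_le_of_isMinOn_of_strongConvexOn {f : F → ℝ} {μ : ℝ}
    (hf : StrongConvexOn univ μ f) {y : F} (hy : IsMinOn f univ y) (z : F) :
    f y + μ / 2 * ‖z - y‖ ^ 2 ≤ f z := by
  have hsegment : ∀ s ∈ Ioo (0 : ℝ) 1, f y + (1 - s) * (μ / 2 * ‖z - y‖ ^ 2) ≤ f z := by
    rintro s ⟨hs, hs'⟩
    have hconv := hf.2 (mem_univ y) (mem_univ z) (sub_nonneg.2 hs'.le) hs.le (sub_add_cancel _ _)
    have hmin : f y ≤ f ((1 - s) • y + s • z) := hy (mem_univ _)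
    simp only [smul_eq_mul, norm_sub_rev y z] at hconv
    refine le_of_mul_le_mul_left ?_ hs
    linarith
  have hlim : Tendsto (fun s : ℝ => f y + (1 - s) * (μ / 2 * ‖z - y‖ ^ 2)) (𝓝[>] 0)
      (𝓝 (f y + (1 - 0) * (μ / 2 * ‖z - y‖ ^ 2))) :=
    (Continuous.tendsto (by fun_prop) 0).mono_left nhdsWithin_le_nhds
  rw [sub_zero, one_mul] at hlim
  exact le_of_tendsto hlim (Filter.mem_of_superset (Ioo_mem_nhdsGT one_pos) hsegment)

namespace IsProximalMap

variable {w : F → ℝ} {k μ : ℝ} {P : F → F}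

theorem norm_sub_le (hP : IsProximalMap k μ w P) (hk : 0 ≤ k) (hμ : 0 < μ) (x z : F) :
    ‖P z - P x‖ ≤ k / μ * ‖z - x‖ := by
  have hmonotone : μ * ‖P z - P x‖ ^ 2 ≤ k * ⟪z - x, P z - P x⟫ := by
    have hx := hP x (P z)
    have hz := hP z (P x)
    rw [norm_sub_rev (P x)] at hz
    have hcross : ‖x - P z‖ ^ 2 + ‖z - P x‖ ^ 2 - ‖x - P x‖ ^ 2 - ‖z - P z‖ ^ 2 =
        2 * ⟪z - x, P z - P x⟫ := by
      simp only [norm_sub_sq_real, inner_sub_left, inner_sub_right]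
      ring
    linear_combination hx + hz + k / 2 * hcross
  have hCS : k * ⟪z - x, P z - P x⟫ ≤ k * ‖z - x‖ * ‖P z - P x‖ := by
    rw [mul_assoc]
    gcongr
    exact real_inner_le_norm _ _
  rcases (norm_nonneg (P z - P x)).eq_or_lt with hzero | hpos
  · rw [← hzero]
    positivity
  · rw [div_mul_eq_mul_div, le_div_iff₀ hμ, mul_comm]
    exact le_of_mul_le_mul_right (by linarith [sq ‖P z - P x‖]) hpos

theorem abs_moreauEnvelope_sub_le (hP : IsProximalMap k μ w P) (hk : 0 ≤ k) (hμ : 0 < μ)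
    (x z : F) :
    |moreauEnvelope k w z - moreauEnvelope k w x - ⟪k • (x - P x), z - x⟫| ≤
      (k / 2 + k * (k / μ)) * ‖z - x‖ ^ 2 := by
  have hshift : ∀ y, ‖z - y‖ ^ 2 = ‖x - y‖ ^ 2 + 2 * ⟪x - y, z - x⟫ + ‖z - x‖ ^ 2 := fun y => by
    rw [← norm_add_sq_real, add_comm, sub_add_sub_cancel]
  have hupper := hP.moreauEnvelope_le hμ.le z (P x)
  have hlower := hP.moreauEnvelope_le hμ.le x (P z)
  have heqx := hP.moreauEnvelope_eq hμ.le x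
  have heqz := hP.moreauEnvelope_eq hμ.le z
  rw [hshift] at hupper heqz
  have hgap : ⟪P z - P x, z - x⟫ = ⟪x - P x, z - x⟫ - ⟪x - P z, z - x⟫ := by
    rw [← inner_sub_left, sub_sub_sub_cancel_left]
  have hgap_le : k * ⟪P z - P x, z - x⟫ ≤ k * (k / μ) * ‖z - x‖ ^ 2 := by
    rw [mul_assoc, sq, ← mul_assoc (k / μ)]
    exact mul_le_mul_of_nonneg_left ((real_inner_le_norm _ _).trans
      (mul_le_mul_of_nonneg_right (hP.norm_sub_le hk hμ x z) (norm_nonneg _))) hk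
  have hquad : 0 ≤ k * ‖z - x‖ ^ 2 := by positivity
  have hquad' : 0 ≤ k * (k / μ) * ‖z - x‖ ^ 2 := by positivity
  rw [real_inner_smul_left, abs_le]
  rw [hgap] at hgap_le
  constructor <;> linarith

theorem hasGradientAt_moreauEnvelope [CompleteSpace F] (hP : IsProximalMap k μ w P)
    (hk : 0 ≤ k) (hμ : 0 < μ) (x : F) :
    HasGradientAt (moreauEnvelope k w) (k • (x - P x)) x := by
  rw [hasGradientAt_iff_isLittleO]
  refine Asymptotics.IsBigO.trans_isLittleO (g := fun z => ‖z - x‖ ^ 2) ?_ ?_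
  · refine Asymptotics.IsBigO.of_bound (k / 2 + k * (k / μ)) (.of_forall fun z => ?_)
    simpa using hP.abs_moreauEnvelope_sub_le hk hμ x z
  · simpa using (Asymptotics.isLittleO_pow_sub_sub x one_lt_two).norm_right

theorem lipschitzWith_gradient (hP : IsProximalMap k μ w P) (hk : 0 ≤ k) (hμ : 0 < μ) :
    LipschitzWith (Real.toNNReal (k * (1 + k / μ))) fun x => k • (x - P x) := by
  refine LipschitzWith.of_dist_le' fun x z => ?_
  rw [dist_eq_norm, dist_eq_norm, ← smul_sub, norm_smul, Real.norm_eq_abs, abs_of_nonneg hk,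
    mul_assoc, sub_sub_sub_comm]
  gcongr
  linarith [_root_.norm_sub_le (x - z) (P x - P z), hP.norm_sub_le hk hμ z x]

end IsProximalMap

theorem convexOn_supConvolution_add_sq {Q : Set F} {u : F → ℝ} (hQ : IsCompact Q)
    (hu : ContinuousOn u Q) (l : ℝ) (hne : Q.Nonempty) :
    ConvexOn ℝ univ fun y => supConvolution l Q u y + l / 2 * ‖y‖ ^ 2 := by
  have hexpand : ∀ a y : F, ‖a - y‖ ^ 2 = ‖a‖ ^ 2 - 2 * ⟪a, y⟫ + ‖y‖ ^ 2 := norm_sub_sq_real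
  refine ⟨convex_univ, fun y _ z _ s r _ _ hsr => ?_⟩
  obtain ⟨a, ha, heq⟩ := exists_supConvolution_eq hQ hu l (s • y + r • z) hne
  have hy := le_supConvolution hQ hu l y ha
  have hz := le_supConvolution hQ hu l z ha
  simp only [smul_eq_mul]
  rw [heq, hexpand, inner_add_right, inner_smul_right, inner_smul_right]
  rw [hexpand] at hy hz
  obtain rfl := eq_sub_of_add_eq hsr
  nlinarith

variable [FiniteDimensional ℝ F]

theorem tendsto_cocompact_of_strongConvexOn {f : F → ℝ} {μ : ℝ} (hμ : 0 < μ)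
    (hf : StrongConvexOn univ μ f) : Tendsto f (cocompact F) atTop := by
  have hconv := strongConvexOn_iff_convex.1 hf
  obtain ⟨L, c, hLc, -⟩ := hconv.exists_affine_le_of_lt (𝕜 := ℝ) (mem_univ 0) (sub_one_lt _)
    isClosed_univ (hconv.locallyLipschitz.continuous.lowerSemicontinuous.lowerSemicontinuousOn _)
  have hlower : ∀ z, ‖z‖ * (μ / 2 * ‖z‖ - ‖L‖) + c ≤ f z := fun z => by
    have hz : L z + c ≤ f z - μ / 2 * ‖z‖ ^ 2 := hLc ⟨z, mem_univ z⟩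
    have hL : -(‖L‖ * ‖z‖) ≤ L z := neg_le_of_abs_le (L.le_opNorm z)
    linarith
  refine tendsto_atTop_mono hlower (tendsto_atTop_add_const_right _ _ ?_)
  exact tendsto_norm_cocompact_atTop.atTop_mul_atTop₀ (tendsto_atTop_add_const_right _ _
    (tendsto_norm_cocompact_atTop.const_mul_atTop (by positivity)))

theorem exists_forall_add_sq_le_of_strongConvexOn {f : F → ℝ} {μ : ℝ} (hμ : 0 < μ)
    (hf : StrongConvexOn univ μ f) : ∃ y, ∀ z, f y + μ / 2 * ‖z - y‖ ^ 2 ≤ f z := by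
  have hcont : Continuous f :=
    (hf.convexOn fun _ => by positivity).locallyLipschitz.continuous
  obtain ⟨y, hy⟩ := hcont.exists_forall_le (tendsto_cocompact_of_strongConvexOn hμ hf)
  exact ⟨y, add_sq_le_of_isMinOn_of_strongConvexOn hf fun z _ => hy z⟩

theorem exists_isProximalMap {w : F → ℝ} {l k : ℝ} (hlk : l < k)
    (hw : ConvexOn ℝ univ fun y => w y + l / 2 * ‖y‖ ^ 2) :
    ∃ P, IsProximalMap k (k - l) w P := by
  have hstrong : ∀ x, StrongConvexOn univ (k - l) fun y => w y + k / 2 * ‖x - y‖ ^ 2 := fun x => by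
    have haffine : ConvexOn ℝ univ fun y => -k * ⟪x, y⟫ + k / 2 * ‖x‖ ^ 2 :=
      ((-k) • innerₗ F x : F →ₗ[ℝ] ℝ).convexOn convex_univ |>.add_const _
    refine strongConvexOn_iff_convex.2 ((hw.add haffine).congr fun y _ => ?_)
    simp only [Pi.add_apply, norm_sub_sq_real x y]
    ring
  choose P hP using fun x =>
    exists_forall_add_sq_le_of_strongConvexOn (sub_pos.2 hlk) (hstrong x)
  exact ⟨P, hP⟩

theorem exists_isRegularization {Q : Set F} (hQ : IsCompact Q) (hne : Q.Nonempty) {u : F → ℝ}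
    (hu : ContinuousOn u Q) {m k : ℝ} (hm : 0 < m) (hk : 0 < k) :
    ∃ (h : F → ℝ) (g : F → F) (L : NNReal), (∀ x, HasGradientAt h (g x) x) ∧ LipschitzWith L g ∧
      IsRegularization m k Q u h := by
  set l := m * k / (m + k)
  have hlk : l < k := by
    rw [div_lt_iff₀ (by positivity)]
    nlinarith
  obtain ⟨P, hP⟩ := exists_isProximalMap hlk (convexOn_supConvolution_add_sq hQ hu l hne)
  refine ⟨moreauEnvelope k (supConvolution l Q u), fun x => k • (x - P x), _,
    hP.hasGradientAt_moreauEnvelope hk.le (sub_pos.2 hlk),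
    hP.lipschitzWith_gradient hk.le (sub_pos.2 hlk), fun a ha x => ?_, fun x y => ?_⟩
  · have hsup := le_supConvolution hQ hu l (P x) ha
    have hparallel := mul_norm_add_sq_le (add_pos hm hk) (a - x) (x - P x)
    rw [sub_add_sub_cancel] at hparallel
    rw [hP.moreauEnvelope_eq (sub_pos.2 hlk).le]
    linarith
  · obtain ⟨a, ha, heq⟩ := exists_supConvolution_eq hQ hu l y hne
    exact ⟨a, ha, heq ▸ hP.moreauEnvelope_le (sub_pos.2 hlk).le x y⟩

end Regularization

section SecondOrder

variable {F : Type*} [NormedAddCommGroup F] [InnerProductSpace ℝ F]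

/-- `(p, A)` is a second-order superjet at `a` of the restriction of `u` to `Q`. -/
def IsSuperjetOn (Q : Set F) (u : F → ℝ) (a p : F) (A : F →L[ℝ] F) : Prop :=
  ∀ ε > 0, ∀ᶠ z in 𝓝[Q] a,
    u z ≤ u a + ⟪p, z - a⟫ + 1 / 2 * ⟪A (z - a), z - a⟫ + ε * ‖z - a‖ ^ 2

theorem isSuperjetOn_of_hasFDerivAt_gradient [CompleteSpace F] {h : F → ℝ} {g : F → F}
    (hg : ∀ x, HasGradientAt h (g x) x) {a : F} {A : F →L[ℝ] F} (hA : HasFDerivAt g A a)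
    (Q : Set F) : IsSuperjetOn Q h a (g a) A := by
  intro ε hε
  refine eventually_nhdsWithin_of_eventually_nhds ?_
  obtain ⟨δ, hδ, hball⟩ := Metric.eventually_nhds_iff.1 (hA.isLittleO.def hε)
  refine Metric.eventually_nhds_iff.2 ⟨δ, hδ, fun z hz => ?_⟩
  rw [dist_eq_norm] at hz
  set e := z - a with he
  set ψ : ℝ → ℝ := fun t => h (a + t • e) - t * ⟪g a, e⟫ - t ^ 2 / 2 * ⟪A e, e⟫ with hψ
  have hderiv (t : ℝ) : HasDerivAt ψ (⟪g (a + t • e), e⟫ - ⟪g a, e⟫ - t * ⟪A e, e⟫) t := by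
    have hline : HasDerivAt (fun t : ℝ => a + t • e) e t := by
      simpa using ((hasDerivAt_id t).smul_const e).const_add a
    have hcomp : HasDerivAt (fun t : ℝ => h (a + t • e)) ⟪g (a + t • e), e⟫ t :=
      ((hg (a + t • e)).hasFDerivAt.comp_hasDerivAt t hline).congr_deriv (by simp)
    have hquad : HasDerivAt (fun t : ℝ => t ^ 2 / 2 * ⟪A e, e⟫) (t * ⟪A e, e⟫) t :=
      (((hasDerivAt_pow 2 t).div_const 2).mul_const ⟪A e, e⟫).congr_deriv (by norm_num)
    exact (hcomp.sub (by simpa using (hasDerivAt_id t).mul_const ⟪g a, e⟫)).sub hquad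
  have hbound : ∀ t ∈ Ico (0 : ℝ) 1,
      ‖⟪g (a + t • e), e⟫ - ⟪g a, e⟫ - t * ⟪A e, e⟫‖ ≤ ε * ‖e‖ ^ 2 := by
    intro t ht
    have hte : ‖t • e‖ ≤ ‖e‖ := by
      rw [norm_smul, Real.norm_of_nonneg ht.1]
      exact mul_le_of_le_one_left (norm_nonneg _) ht.2.le
    have hsmall := hball (y := a + t • e) (by simpa [dist_eq_norm] using hte.trans_lt hz)
    rw [add_sub_cancel_left] at hsmall
    calc ‖⟪g (a + t • e), e⟫ - ⟪g a, e⟫ - t * ⟪A e, e⟫‖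
        = ‖⟪g (a + t • e) - g a - A (t • e), e⟫‖ := by
          rw [inner_sub_left, inner_sub_left, map_smul, real_inner_smul_left]
      _ ≤ ε * ‖t • e‖ * ‖e‖ := (norm_inner_le_norm _ _).trans (by gcongr)
      _ ≤ ε * ‖e‖ * ‖e‖ := by gcongr
      _ = ε * ‖e‖ ^ 2 := by ring
  have hdiff := (le_abs_self _).trans (norm_image_sub_le_of_norm_deriv_le_segment_01'
    (fun t _ => (hderiv t).hasDerivWithinAt) hbound)
  simp only [hψ, one_smul, zero_smul, add_zero, he, add_sub_cancel] at hdiff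
  linarith

namespace IsSuperjetOn

variable {Q : Set F} {u : F → ℝ} {a p : F} {A : F →L[ℝ] F}

/-- The majorant of `h` at `α` is translated to `a`: take `x = z - a + α` in `hle`. -/
theorem of_le_add_sq {h : F → ℝ} {α : F} {m : ℝ} (hα : IsSuperjetOn univ h α p A)
    (hle : ∀ z ∈ Q, ∀ x, u z ≤ h x + m / 2 * ‖z - x‖ ^ 2)
    (heq : u a = h α + m / 2 * ‖a - α‖ ^ 2) : IsSuperjetOn Q u a p A := by
  intro ε hε
  have htends : Tendsto (fun z => z - a + α) (𝓝[Q] a) (𝓝 α) := by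
    have : Continuous fun z => z - a + α := by fun_prop
    simpa using (this.tendsto a).mono_left nhdsWithin_le_nhds
  have hev := hα ε hε
  rw [nhdsWithin_univ] at hev
  filter_upwards [htends.eventually hev, self_mem_nhdsWithin] with z hz hzQ
  have hzu := hle z hzQ (z - a + α)
  rw [sub_add_eq_sub_sub, sub_sub_cancel] at hzu
  rw [add_sub_cancel_right] at hz
  linarith

theorem inner_nonneg_of_isLocalMin (h : IsSuperjetOn univ u a 0 A) (hmin : IsLocalMin u a)
    (e : F) : 0 ≤ ⟪A e, e⟫ := by
  have hε (ε : ℝ) (hε : 0 < ε) : 0 ≤ 1 / 2 * ⟪A e, e⟫ + ε * ‖e‖ ^ 2 := by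
    have htends : Tendsto (fun t : ℝ => a + t • e) (𝓝[>] 0) (𝓝 a) := by
      have : Continuous fun t : ℝ => a + t • e := by fun_prop
      simpa using (this.tendsto 0).mono_left nhdsWithin_le_nhds
    have hev := h ε hε
    rw [nhdsWithin_univ] at hev
    obtain ⟨t, ⟨hjet, hmin_t⟩, (ht : 0 < t)⟩ :=
      (((htends.eventually (hev.and hmin)).and self_mem_nhdsWithin).exists)
    simp only [add_sub_cancel_left, inner_zero_left, map_smul, real_inner_smul_left,
      inner_smul_right, norm_smul, mul_pow, Real.norm_eq_abs, sq_abs] at hjet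
    refine nonneg_of_mul_nonneg_right (a := t ^ 2) ?_ (pow_pos ht 2)
    linarith
  have hcont : Tendsto (fun ε : ℝ => 1 / 2 * ⟪A e, e⟫ + ε * ‖e‖ ^ 2) (𝓝[>] 0)
      (𝓝 (1 / 2 * ⟪A e, e⟫ + 0 * ‖e‖ ^ 2)) :=
    ((continuous_const.add (continuous_id.mul continuous_const)).tendsto 0).mono_left
      nhdsWithin_le_nhds
  have hlim := ge_of_tendsto hcont (eventually_mem_nhdsWithin.mono hε)
  linarith

end IsSuperjetOn

variable [CompleteSpace F]

theorem hasGradientAt_half_inner_add_inner {A : F →L[ℝ] F}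
    (hA : (A : F →ₗ[ℝ] F).IsSymmetric) (p x : F) :
    HasGradientAt (fun x => 1 / 2 * ⟪A x, x⟫ + ⟪p, x⟫) (A x + p) x := by
  rw [hasGradientAt_iff_hasFDerivAt]
  have hquad := (A.hasFDerivAt.inner ℝ (hasFDerivAt_id x)).const_mul (1 / 2 : ℝ)
  have hlin := (hasFDerivAt_const p x).inner ℝ (hasFDerivAt_id x)
  refine (hquad.add hlin).congr_fderiv ?_
  ext v
  have hsymm : ⟪A v, x⟫ = ⟪A x, v⟫ := (hA v x).trans (real_inner_comm _ _)
  simp [hsymm]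
  ring

theorem gradient_eq_and_inner_le_of_le_quadratic {h : F → ℝ} {g : F → F}
    (hg : ∀ x, HasGradientAt h (g x) x) {A : F →L[ℝ] F} (hA : (A : F →ₗ[ℝ] F).IsSymmetric)
    {p ζ : F} {c : ℝ} (hle : ∀ x, h x ≤ c + (1 / 2 * ⟪A x, x⟫ + ⟪p, x⟫))
    (heq : h ζ = c + (1 / 2 * ⟪A ζ, ζ⟫ + ⟪p, ζ⟫)) :
    g ζ = A ζ + p ∧ ∀ D : F →L[ℝ] F, HasFDerivAt g D ζ → ∀ e, ⟪D e, e⟫ ≤ ⟪A e, e⟫ := by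
  set q : F → ℝ := fun x => 1 / 2 * ⟪A x, x⟫ + ⟪p, x⟫ - h x
  have hq (x : F) : HasGradientAt q (A x + p - g x) x := by
    rw [hasGradientAt_iff_hasFDerivAt, map_sub]
    exact (hasGradientAt_half_inner_add_inner hA p x).hasFDerivAt.sub (hg x).hasFDerivAt
  have hmin : IsLocalMin q ζ := Eventually.of_forall fun x => by
    have := hle x
    simp only [q]
    linarith
  have hzero : A ζ + p - g ζ = 0 :=
    (InnerProductSpace.toDual ℝ F).map_eq_zero_iff.1 (hmin.hasFDerivAt_eq_zero (hq ζ).hasFDerivAt)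
  refine ⟨(sub_eq_zero.1 hzero).symm, fun D hD e => ?_⟩
  have hjet := isSuperjetOn_of_hasFDerivAt_gradient hq ((A.hasFDerivAt.add_const p).sub hD) univ
  rw [hzero] at hjet
  simpa [inner_sub_left] using hjet.inner_nonneg_of_isLocalMin hmin e

end SecondOrder

section Penalization

/-- The quadratic penalization of `U`: the first variable `z` is kept at distance of order
`m^(-1/2)` from `ζ`, and `ζ` is penalized by a quadratic form and a linear perturbation. -/
def penalization {E : Type*} [NormedAddCommGroup E] [InnerProductSpace ℝ E] (U : E → ℝ) (m : ℝ)
    (A : E →L[ℝ] E) (p z ζ : E) : ℝ :=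
  U z - m / 2 * ‖z - ζ‖ ^ 2 - (1 / 2 * ⟪A ζ, ζ⟫ + ⟪p, ζ⟫)

variable {E : Type*} [NormedAddCommGroup E] [InnerProductSpace ℝ E] {Q : Set E} {U h : E → ℝ}
  {A : E →L[ℝ] E} {m : ℝ}

theorem IsRegularization.le_of_forall_le {k : ℝ} (hreg : IsRegularization m k Q U h) (hm : 0 < m)
    (hk : 0 < k) {q : E → ℝ} {c : ℝ} (hc : ∀ z ∈ Q, ∀ x, U z - m / 2 * ‖z - x‖ ^ 2 ≤ c + q x)
    {ζ G : E} (hq : ∀ x, q x ≤ q ζ + ⟪G, x - ζ⟫ + k / 2 * ‖x - ζ‖ ^ 2) : h ζ ≤ c + q ζ := by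
  obtain ⟨a, ha, hle⟩ := hreg.exists_le ζ (ζ - k⁻¹ • G)
  obtain ⟨x, hx⟩ := exists_mul_norm_sub_sq_add_eq (add_pos hm hk) a (ζ - k⁻¹ • G)
  have hsq : k * ‖x - (ζ - k⁻¹ • G)‖ ^ 2 - k * ‖ζ - (ζ - k⁻¹ • G)‖ ^ 2
      = k * ‖x - ζ‖ ^ 2 + 2 * ⟪G, x - ζ⟫ := by
    rw [sub_sub_eq_add_sub, add_sub_right_comm, sub_sub_cancel, norm_add_sq_real, inner_smul_right,
      real_inner_comm]
    field_simp
    ring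
  linarith [hc a ha x, hq x]

theorem inner_map_self_le_taylor (hA : (A : E →ₗ[ℝ] E).IsSymmetric) {k : ℝ} (hk : ‖A‖ ≤ k)
    (p ζ x : E) : 1 / 2 * ⟪A x, x⟫ + ⟪p, x⟫ ≤
      1 / 2 * ⟪A ζ, ζ⟫ + ⟪p, ζ⟫ + ⟪A ζ + p, x - ζ⟫ + k / 2 * ‖x - ζ‖ ^ 2 := by
  have hnorm : ⟪A (x - ζ), x - ζ⟫ ≤ k * ‖x - ζ‖ ^ 2 := by
    refine (real_inner_le_norm _ _).trans ?_
    rw [pow_two, ← mul_assoc]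
    gcongr
    exact A.le_of_opNorm_le hk _
  have hsymm : ⟪A x, ζ⟫ = ⟪A ζ, x⟫ := (hA x ζ).trans (real_inner_comm _ _)
  simp only [map_sub, inner_sub_left, inner_sub_right, inner_add_left] at hnorm ⊢
  linarith

theorem IsRegularization.contact_of_isMaxOn {k : ℝ} (hreg : IsRegularization m k Q U h)
    (hm : 0 < m) (hk : 0 < k) (hA : (A : E →ₗ[ℝ] E).IsSymmetric) (hAk : ‖A‖ ≤ k) {p z ζ : E}
    (hz : z ∈ Q)
    (hmax : ∀ z' ∈ Q, ∀ ζ', penalization U m A p z' ζ' ≤ penalization U m A p z ζ) :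
    U z = h ζ + m / 2 * ‖z - ζ‖ ^ 2 ∧
      (∀ x, h x ≤ penalization U m A p z ζ + (1 / 2 * ⟪A x, x⟫ + ⟪p, x⟫)) ∧
      h ζ = penalization U m A p z ζ + (1 / 2 * ⟪A ζ, ζ⟫ + ⟪p, ζ⟫) := by
  have hle (x : E) := hreg.le_of_forall_le hm hk (c := penalization U m A p z ζ)
    (q := fun x => 1 / 2 * ⟪A x, x⟫ + ⟪p, x⟫)
    (fun z' hz' x' => sub_le_iff_le_add.1 (hmax z' hz' x'))
    (inner_map_self_le_taylor hA hAk p x)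
  have hζ := hle ζ
  have hzζ := hreg.le_add_sq z hz ζ
  refine ⟨?_, hle, ?_⟩ <;> simp only [penalization] at hζ ⊢ <;> linarith

theorem exists_norm_le_of_penalization_le (hQ : Bornology.IsBounded Q)
    (hU : Bornology.IsBounded (U '' Q)) (hA : ∀ x, 0 ≤ ⟪A x, x⟫) (hm : 0 < m) :
    ∃ C, ∀ p, ‖p‖ ≤ 1 → ∀ z ∈ Q, ∀ z₀ ∈ Q, ∀ ζ,
      penalization U m A p z₀ z₀ ≤ penalization U m A p z ζ → ‖ζ‖ ≤ C := by
  obtain ⟨R, hR⟩ := hQ.exists_norm_le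
  obtain ⟨M, hM⟩ := hU.exists_norm_le
  refine ⟨R + (1 + 2 / m * (2 * M + ‖A‖ * R ^ 2 / 2 + 2 * R + 1)), ?_⟩
  intro p hp z hz z₀ hz₀ ζ hle
  have hR0 := (norm_nonneg z).trans (hR z hz)
  have hUz := abs_le.1 (hM _ (mem_image_of_mem U hz))
  have hUz₀ := abs_le.1 (hM _ (mem_image_of_mem U hz₀))
  have hAz₀ : ⟪A z₀, z₀⟫ ≤ ‖A‖ * R ^ 2 := by
    refine (real_inner_le_norm _ _).trans ?_
    rw [pow_two, ← mul_assoc]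
    gcongr
    exacts [A.le_of_opNorm_le_of_le le_rfl (hR z₀ hz₀), hR z₀ hz₀]
  have hp' : ⟪p, z₀ - ζ⟫ ≤ 2 * R + ‖z - ζ‖ := by
    have htri : ‖z₀ - ζ‖ ≤ ‖z₀‖ + (‖z‖ + ‖z - ζ‖) :=
      (norm_sub_le _ _).trans (by gcongr; exact norm_le_norm_add_norm_sub z ζ)
    have := (real_inner_le_norm p (z₀ - ζ)).trans (mul_le_of_le_one_left (norm_nonneg _) hp)
    linarith [hR z hz, hR z₀ hz₀]
  simp only [penalization, sub_self, norm_zero] at hle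
  rw [inner_sub_right] at hp'
  set K := 2 * M + ‖A‖ * R ^ 2 / 2 + 2 * R + 1 with hK
  have hd : m / 2 * ‖z - ζ‖ ^ 2 ≤ K - 1 + ‖z - ζ‖ := by linarith [hA ζ]
  have hK1 : 1 ≤ K := by
    have hM0 : 0 ≤ M := (norm_nonneg _).trans (hM _ (mem_image_of_mem U hz))
    have : 0 ≤ 2 * M + ‖A‖ * R ^ 2 / 2 + 2 * R := by positivity
    linarith
  have hd' : ‖z - ζ‖ ≤ 1 + 2 / m * K := by
    rcases le_total ‖z - ζ‖ 1 with h1 | h1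
    · exact h1.trans (le_add_of_nonneg_right (by positivity))
    · have hmul : m / 2 * ‖z - ζ‖ * ‖z - ζ‖ ≤ K * ‖z - ζ‖ := by nlinarith
      have := le_of_mul_le_mul_right hmul (by linarith)
      rw [div_mul_eq_mul_div, ← sub_le_iff_le_add', le_div_iff₀ hm]
      linarith
  linarith [norm_le_norm_add_norm_sub z ζ, hR z hz]

theorem exists_isMaxOn_penalization [FiniteDimensional ℝ E] (hQ : IsCompact Q) (hne : Q.Nonempty)
    (hU : ContinuousOn U Q) (hA : ∀ x, 0 ≤ ⟪A x, x⟫) (hm : 0 < m) {p : E} (hp : ‖p‖ ≤ 1) :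
    ∃ z ∈ Q, ∃ ζ, ∀ z' ∈ Q, ∀ ζ', penalization U m A p z' ζ' ≤ penalization U m A p z ζ := by
  obtain ⟨C, hC⟩ := exists_norm_le_of_penalization_le hQ.isBounded
    (hQ.image_of_continuousOn hU).isBounded hA hm
  obtain ⟨z₀, hz₀⟩ := hne
  have hmem : (z₀, z₀) ∈ Q ×ˢ Metric.closedBall (0 : E) C :=
    ⟨hz₀, mem_closedBall_zero_iff.2 (hC p hp z₀ hz₀ z₀ hz₀ z₀ le_rfl)⟩
  have hcont : ContinuousOn (fun w : E × E => penalization U m A p w.1 w.2)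
      (Q ×ˢ Metric.closedBall 0 C) :=
    ((hU.comp continuousOn_fst fun w hw => hw.1).sub (by fun_prop)).sub (by fun_prop)
  obtain ⟨⟨z, ζ⟩, hw, hmax⟩ :=
    (hQ.prod (isCompact_closedBall (0 : E) C)).exists_isMaxOn ⟨_, hmem⟩ hcont
  refine ⟨z, hw.1, ζ, fun z' hz' ζ' => ?_⟩
  rcases le_total (penalization U m A p z' ζ') (penalization U m A p z₀ z₀) with hle | hle
  · exact hle.trans (hmax hmem)
  · exact hmax (show (z', ζ') ∈ _ from
      ⟨hz', mem_closedBall_zero_iff.2 (hC p hp z' hz' z₀ hz₀ ζ' hle)⟩)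

open MeasureTheory in
/-- Rademacher's theorem on `S`, which cannot be null because Lipschitz maps preserve null sets. -/
theorem exists_differentiableAt_of_ball_subset_image {E E' : Type*} [NormedAddCommGroup E]
    [NormedSpace ℝ E] [FiniteDimensional ℝ E] [NormedAddCommGroup E'] [NormedSpace ℝ E']
    [FiniteDimensional ℝ E'] {Γ : E → E} {C C' : NNReal} (hΓ : LipschitzWith C Γ) {G : E → E'}
    (hG : LipschitzWith C' G) {S : Set E} {x : E} {r : ℝ} (hr : 0 < r)
    (hS : Metric.ball x r ⊆ Γ '' S) : ∃ x ∈ S, DifferentiableAt ℝ G x := by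
  borelize E
  by_contra! hcon
  have hnull : μH[Module.finrank ℝ E] S = 0 :=
    measure_mono_null (fun x hx => hcon x hx)
      (ae_iff.1 (hG.ae_differentiableAt (μ := μH[Module.finrank ℝ E])))
  have himage := hΓ.hausdorffMeasure_image_le (d := Module.finrank ℝ E) (by positivity) S
  rw [hnull, mul_zero] at himage
  have hpos : 0 < μH[(Module.finrank ℝ E : ℝ)] (Metric.ball x r) := Metric.measure_ball_pos _ _ hr
  exact absurd ((measure_mono hS).trans himage) (not_le.2 hpos)

theorem forall_le_of_isMaxOn_penalization {p z ζ : E} {C R ρ : ℝ} (hQ : ∀ z ∈ Q, ‖z‖ ≤ R)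
    (hζ : ‖ζ‖ ≤ C) (hp : ‖p‖ * (R + C) ≤ ρ)
    (hmax : ∀ z' ∈ Q, ∀ ζ', penalization U m A p z' ζ' ≤ penalization U m A p z ζ) :
    ∀ z' ∈ Q, U z' - 1 / 2 * ⟪A z', z'⟫ ≤
      U z - m / 2 * ‖z - ζ‖ ^ 2 - 1 / 2 * ⟪A ζ, ζ⟫ + ρ := by
  intro z' hz'
  have hle := hmax z' hz' z'
  have hinner : ⟪p, z' - ζ⟫ ≤ ρ :=
    calc ⟪p, z' - ζ⟫ ≤ ‖p‖ * ‖z' - ζ‖ := real_inner_le_norm _ _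
      _ ≤ ‖p‖ * (R + C) := by
        gcongr
        exact (norm_sub_le _ _).trans (add_le_add (hQ z' hz') hζ)
      _ ≤ ρ := hp
  simp only [penalization, sub_self, norm_zero] at hle
  rw [inner_sub_right] at hinner
  linarith

/-- The counterpart of Jensen's lemma and Alexandrov's theorem. -/
theorem exists_contact_differentiableAt [FiniteDimensional ℝ E] (hQ : IsCompact Q)
    (hne : Q.Nonempty) (hU : ContinuousOn U Q) (hA : A.IsPositive) (hm : 0 < m) {k : ℝ}
    (hk : 0 < k) (hAk : ‖A‖ ≤ k) (hreg : IsRegularization m k Q U h) {g : E → E} {L : NNReal}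
    (hg : ∀ x, HasGradientAt h (g x) x) (hL : LipschitzWith L g) {ρ : ℝ} (hρ : 0 < ρ) :
    ∃ z ∈ Q, ∃ ζ p, ‖p‖ ≤ ρ ∧ g ζ = A ζ + p ∧ DifferentiableAt ℝ g ζ ∧
      U z = h ζ + m / 2 * ‖z - ζ‖ ^ 2 ∧ (∀ e, ⟪fderiv ℝ g ζ e, e⟫ ≤ ⟪A e, e⟫) ∧
      ∀ z' ∈ Q, U z' - 1 / 2 * ⟪A z', z'⟫ ≤
        U z - m / 2 * ‖z - ζ‖ ^ 2 - 1 / 2 * ⟪A ζ, ζ⟫ + ρ := by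
  obtain ⟨C, hC⟩ := exists_norm_le_of_penalization_le hQ.isBounded
    (hQ.image_of_continuousOn hU).isBounded hA.inner_nonneg_left hm
  obtain ⟨R, hR⟩ := hQ.isBounded.exists_norm_le
  obtain ⟨z₀, hz₀⟩ := hne
  have hR0 : 0 ≤ R := (norm_nonneg z₀).trans (hR z₀ hz₀)
  have hC0 : 0 ≤ C := (norm_nonneg z₀).trans (hC 0 (by simp) z₀ hz₀ z₀ hz₀ z₀ le_rfl)
  set r := min (min 1 ρ) (ρ / (R + C + 1))
  have hr : 0 < r := by positivity
  have hr1 : r ≤ 1 := (min_le_left _ _).trans (min_le_left _ _)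
  let S : Set E := {ζ | ∃ p, ‖p‖ < r ∧ ∃ z ∈ Q,
    ∀ z' ∈ Q, ∀ ζ', penalization U m A p z' ζ' ≤ penalization U m A p z ζ}
  have hcontact {p z ζ} :=
    hreg.contact_of_isMaxOn (p := p) (z := z) (ζ := ζ) hm hk hA.isSymmetric hAk
  have himage : Metric.ball 0 r ⊆ (fun ζ => g ζ - A ζ) '' S := by
    intro p hp
    rw [mem_ball_zero_iff] at hp
    obtain ⟨z, hz, ζ, hmax⟩ :=
      exists_isMaxOn_penalization hQ ⟨z₀, hz₀⟩ hU hA.inner_nonneg_left hm (hp.le.trans hr1)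
    obtain ⟨-, hle, heq⟩ := hcontact hz hmax
    refine ⟨ζ, ⟨p, hp, z, hz, hmax⟩, ?_⟩
    simp [(gradient_eq_and_inner_le_of_le_quadratic hg hA.isSymmetric hle heq).1]
  obtain ⟨ζ, ⟨p, hp, z, hz, hmax⟩, hdiff⟩ :=
    exists_differentiableAt_of_ball_subset_image (hL.sub A.lipschitz) hL hr himage
  obtain ⟨hUz, hle, heq⟩ := hcontact hz hmax
  obtain ⟨hgrad, hhess⟩ := gradient_eq_and_inner_le_of_le_quadratic hg hA.isSymmetric hle heq
  have hpρ : ‖p‖ * (R + C) ≤ ρ :=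
    calc ‖p‖ * (R + C) ≤ ρ / (R + C + 1) * (R + C + 1) :=
          mul_le_mul (hp.le.trans (min_le_right _ _)) (by linarith) (by positivity) (by positivity)
      _ = ρ := by field_simp
  exact ⟨z, hz, ζ, p, hp.le.trans ((min_le_left _ _).trans (min_le_right _ _)), hgrad, hdiff, hUz,
    hhess _ hdiff.hasFDerivAt, forall_le_of_isMaxOn_penalization hR
      (hC p (hp.le.trans hr1) z hz z₀ hz₀ ζ (hmax z₀ hz₀ z₀)) hpρ hmax⟩

end Penalization

section Sums

variable {E F : Type*} [NormedAddCommGroup E] [NormedAddCommGroup F]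

theorem IsRegularization.prod {m k : ℝ} {P : Set E} {Q : Set F} {u h₁ : E → ℝ} {v h₂ : F → ℝ}
    (H₁ : IsRegularization m k P u h₁) (H₂ : IsRegularization m k Q v h₂) :
    IsRegularization m k {z : WithLp 2 (E × F) | z.fst ∈ P ∧ z.snd ∈ Q}
      (fun z => u z.fst + v z.snd) (fun z => h₁ z.fst + h₂ z.snd) where
  le_add_sq a ha x := by
    rw [WithLp.prod_norm_sq_eq_of_L2]
    have hfst := H₁.le_add_sq a.fst ha.1 x.fst
    have hsnd := H₂.le_add_sq a.snd ha.2 x.snd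
    simp only [WithLp.sub_fst, WithLp.sub_snd]
    linarith
  exists_le x y := by
    obtain ⟨a, ha, hfst⟩ := H₁.exists_le x.fst y.fst
    obtain ⟨b, hb, hsnd⟩ := H₂.exists_le x.snd y.snd
    refine ⟨.toLp 2 (a, b), ⟨ha, hb⟩, ?_⟩
    simp only [WithLp.prod_norm_sq_eq_of_L2, WithLp.sub_fst, WithLp.sub_snd, WithLp.toLp_fst,
      WithLp.toLp_snd]
    linarith

variable [InnerProductSpace ℝ E] [InnerProductSpace ℝ F] {h₁ : E → ℝ} {h₂ : F → ℝ} {g₁ : E → E}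
  {g₂ : F → F}

theorem hasGradientAt_prod [CompleteSpace E] [CompleteSpace F]
    (hg₁ : ∀ x, HasGradientAt h₁ (g₁ x) x) (hg₂ : ∀ x, HasGradientAt h₂ (g₂ x) x)
    (z : WithLp 2 (E × F)) :
    HasGradientAt (fun z : WithLp 2 (E × F) => h₁ z.fst + h₂ z.snd)
      (.toLp 2 (g₁ z.fst, g₂ z.snd)) z := by
  rw [hasGradientAt_iff_hasFDerivAt]
  refine (((hg₁ z.fst).hasFDerivAt.comp z (WithLp.fstL 2 ℝ E F).hasFDerivAt).add
    ((hg₂ z.snd).hasFDerivAt.comp z (WithLp.sndL 2 ℝ E F).hasFDerivAt)).congr_fderiv ?_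
  ext w
  simp [WithLp.prod_inner_apply]

theorem exists_lipschitzWith_prod {L₁ L₂ : NNReal} (hL₁ : LipschitzWith L₁ g₁)
    (hL₂ : LipschitzWith L₂ g₂) :
    ∃ L, LipschitzWith L fun z : WithLp 2 (E × F) => WithLp.toLp 2 (g₁ z.fst, g₂ z.snd) := by
  have hfst := hL₁.comp (WithLp.fstL 2 ℝ E F).lipschitz
  have hsnd := hL₂.comp (WithLp.sndL 2 ℝ E F).lipschitz
  exact ⟨_, (WithLp.prodContinuousLinearEquiv 2 ℝ E F).symm.lipschitz.comp (hfst.prodMk hsnd)⟩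

theorem exists_hasFDerivAt_of_prod {z : WithLp 2 (E × F)}
    (hg : DifferentiableAt ℝ (fun z : WithLp 2 (E × F) => WithLp.toLp 2 (g₁ z.fst, g₂ z.snd)) z) :
    ∃ (A₁ : E →L[ℝ] E) (A₂ : F →L[ℝ] F), HasFDerivAt g₁ A₁ z.fst ∧ HasFDerivAt g₂ A₂ z.snd ∧
      ∀ w, fderiv ℝ (fun z : WithLp 2 (E × F) => WithLp.toLp 2 (g₁ z.fst, g₂ z.snd)) z w =
        .toLp 2 (A₁ w.fst, A₂ w.snd) := by
  set Λ := WithLp.prodContinuousLinearEquiv 2 ℝ E F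
  have hg₁ : DifferentiableAt ℝ g₁ z.fst :=
    (((WithLp.fstL 2 ℝ E F).differentiableAt.comp z hg).comp z.fst
      (f := fun x => Λ.symm (x, z.snd)) (by fun_prop) :)
  have hg₂ : DifferentiableAt ℝ g₂ z.snd :=
    (((WithLp.sndL 2 ℝ E F).differentiableAt.comp z hg).comp z.snd
      (f := fun x => Λ.symm (z.fst, x)) (by fun_prop) :)
  refine ⟨_, _, hg₁.hasFDerivAt, hg₂.hasFDerivAt, fun w => ?_⟩
  have hprod := Λ.symm.hasFDerivAt.comp z
    ((hg₁.hasFDerivAt.comp z (WithLp.fstL 2 ℝ E F).hasFDerivAt).prodMk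
      (hg₂.hasFDerivAt.comp z (WithLp.sndL 2 ℝ E F).hasFDerivAt))
  exact congrArg (· w) hprod.fderiv

variable [FiniteDimensional ℝ F]

/-- The operator on `F × F` whose quadratic form is `(α, β) ↦ ⟪B (α - β), α - β⟫`. -/
def differenceOperator (B : F →L[ℝ] F) : WithLp 2 (F × F) →L[ℝ] WithLp 2 (F × F) :=
  (WithLp.fstL 2 ℝ F F - WithLp.sndL 2 ℝ F F).adjoint ∘L B ∘L
    (WithLp.fstL 2 ℝ F F - WithLp.sndL 2 ℝ F F)

theorem inner_differenceOperator (B : F →L[ℝ] F) (z w : WithLp 2 (F × F)) :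
    ⟪differenceOperator B z, w⟫ = ⟪B (z.fst - z.snd), w.fst - w.snd⟫ := by
  rw [differenceOperator, ContinuousLinearMap.comp_apply, ContinuousLinearMap.adjoint_inner_left]
  rfl

theorem differenceOperator_apply (B : F →L[ℝ] F) (z : WithLp 2 (F × F)) :
    differenceOperator B z = .toLp 2 (B (z.fst - z.snd), -B (z.fst - z.snd)) := by
  refine ext_inner_right ℝ fun w => ?_
  rw [inner_differenceOperator, WithLp.prod_inner_apply, inner_sub_right, sub_eq_add_neg,
    ← inner_neg_left]
  rfl

theorem isPositive_differenceOperator {B : F →L[ℝ] F} (hB : B.IsPositive) :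
    (differenceOperator B).IsPositive :=
  hB.adjoint_conj _

/-- The counterpart of the Crandall–Ishii theorem on sums. -/
theorem exists_isSuperjetOn_of_add {Q : Set F} {u v : F → ℝ} (hQ : IsCompact Q)
    (hne : Q.Nonempty) (hu : ContinuousOn u Q) (hv : ContinuousOn v Q) {B : F →L[ℝ] F}
    (hB : B.IsPositive) {m ρ : ℝ} (hm : 0 < m) (hρ : 0 < ρ) :
    ∃ a ∈ Q, ∃ b ∈ Q, ∃ (α β p₁ p₂ : F) (A₁ A₂ : F →L[ℝ] F), ‖p₁‖ ≤ ρ ∧ ‖p₂‖ ≤ ρ ∧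
      IsSuperjetOn Q u a (B (α - β) + p₁) A₁ ∧ IsSuperjetOn Q v b (-B (α - β) + p₂) A₂ ∧
      (∀ e e', ⟪A₁ e, e⟫ + ⟪A₂ e', e'⟫ ≤ ⟪B (e - e'), e - e'⟫) ∧
      ∀ z ∈ Q, u z + v z ≤ u a + v b - m / 2 * (‖a - α‖ ^ 2 + ‖b - β‖ ^ 2)
        - 1 / 2 * ⟪B (α - β), α - β⟫ + ρ := by
  set k := ‖differenceOperator B‖ + 1
  have hk : 0 < k := by positivity
  obtain ⟨h₁, g₁, L₁, hg₁, hL₁, H₁⟩ := exists_isRegularization hQ hne hu hm hk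
  obtain ⟨h₂, g₂, L₂, hg₂, hL₂, H₂⟩ := exists_isRegularization hQ hne hv hm hk
  obtain ⟨L, hL⟩ := exists_lipschitzWith_prod hL₁ hL₂
  set Q₂ : Set (WithLp 2 (F × F)) := {z | z.fst ∈ Q ∧ z.snd ∈ Q}
  have hQ₂ : IsCompact Q₂ :=
    (WithLp.homeomorphProd 2 F F).isCompact_preimage.2 (hQ.prod hQ)
  have hU : ContinuousOn (fun z : WithLp 2 (F × F) => u z.fst + v z.snd) Q₂ :=
    (hu.comp (by fun_prop) fun z hz => hz.1).add (hv.comp (by fun_prop) fun z hz => hz.2)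
  obtain ⟨z₀, hz₀⟩ := hne
  obtain ⟨z, ⟨ha, hb⟩, ζ, p, hp, hgrad, hdiff, hcontact, hhess, hmax⟩ :=
    exists_contact_differentiableAt hQ₂ ⟨.toLp 2 (z₀, z₀), hz₀, hz₀⟩ hU
      (isPositive_differenceOperator hB) hm hk (le_add_of_nonneg_right zero_le_one) (H₁.prod H₂)
      (hasGradientAt_prod hg₁ hg₂) hL hρ
  obtain ⟨A₁, A₂, hA₁, hA₂, hA⟩ := exists_hasFDerivAt_of_prod hdiff
  rw [differenceOperator_apply] at hgrad
  have hgrad₁ : g₁ ζ.fst = B (ζ.fst - ζ.snd) + p.fst := congrArg WithLp.fst hgrad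
  have hgrad₂ : g₂ ζ.snd = -B (ζ.fst - ζ.snd) + p.snd := congrArg WithLp.snd hgrad
  have hle₁ := H₁.le_add_sq _ ha ζ.fst
  have hle₂ := H₂.le_add_sq _ hb ζ.snd
  simp only [WithLp.prod_norm_sq_eq_of_L2, WithLp.sub_fst, WithLp.sub_snd] at hcontact
  have hjet₁ := isSuperjetOn_of_hasFDerivAt_gradient hg₁ hA₁ univ
  have hjet₂ := isSuperjetOn_of_hasFDerivAt_gradient hg₂ hA₂ univ
  refine ⟨z.fst, ha, z.snd, hb, ζ.fst, ζ.snd, p.fst, p.snd, A₁, A₂,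
    (WithLp.norm_fst_le _ p).trans hp, (WithLp.norm_snd_le _ p).trans hp,
    hgrad₁ ▸ hjet₁.of_le_add_sq H₁.le_add_sq (by linarith),
    hgrad₂ ▸ hjet₂.of_le_add_sq H₂.le_add_sq (by linarith), fun e e' => ?_, fun x hx => ?_⟩
  · have hle := hhess (.toLp 2 (e, e'))
    rwa [hA, inner_differenceOperator] at hle
  · have hle := hmax (.toLp 2 (x, x)) ⟨hx, hx⟩
    simp only [inner_differenceOperator, WithLp.prod_norm_sq_eq_of_L2] at hle
    simpa using hle

end Sums

section DoubledJets

variable {F : Type*} [NormedAddCommGroup F] [InnerProductSpace ℝ F] {Q : Set F} {u v : F → ℝ}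

/-- Near `a`, the quadratic function with gradient `p` and Hessian `M` at `a` touches the
restriction of `u` to `Q` from above at `a`. -/
def IsQuadraticMajorantOn (Q : Set F) (u : F → ℝ) (a p : F) (M : F →L[ℝ] F) : Prop :=
  ∀ᶠ z in 𝓝[Q] a, u z ≤ u a + ⟪p, z - a⟫ + 1 / 2 * ⟪M (z - a), z - a⟫

namespace IsSuperjetOn

variable {a p : F} {A : F →L[ℝ] F}

theorem isQuadraticMajorantOn (h : IsSuperjetOn Q u a p A) {ε : ℝ} (hε : 0 < ε) :
    IsQuadraticMajorantOn Q u a p (A + (2 * ε) • ContinuousLinearMap.id ℝ F) := by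
  filter_upwards [h ε hε] with z hz
  simp only [add_apply, smul_apply, ContinuousLinearMap.id_apply, inner_add_left,
    real_inner_smul_left, real_inner_self_eq_norm_sq]
  linarith

theorem of_sub_sq {γ : ℝ} {z₀ : F} (h : IsSuperjetOn Q (fun z => u z - γ * ‖z - z₀‖ ^ 2) a p A) :
    IsSuperjetOn Q u a (p + (2 * γ) • (a - z₀)) (A + (2 * γ) • ContinuousLinearMap.id ℝ F) := by
  intro ε hε
  filter_upwards [h ε hε] with z hz
  have hsq := norm_add_sq_real (a - z₀) (z - a)
  rw [sub_add_sub_cancel'] at hsq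
  simp only [add_apply, smul_apply, ContinuousLinearMap.id_apply, inner_add_left,
    real_inner_smul_left, real_inner_self_eq_norm_sq]
  rw [hsq] at hz
  linarith

end IsSuperjetOn

/-- Quadratic majorants of `u` at `a` and of `v` at `b`, both points `s`-close to `z₀`, found by
doubling the variables: up to errors of size `s` the gradients are opposite, the Hessians satisfy
the matrix inequality for `B`, and the penalization terms vanish. -/
structure DoubledJets (Q : Set F) (u v : F → ℝ) (z₀ : F) (s m : ℝ) (B : F →L[ℝ] F) where
  (a b α β e₁ e₂ : F)
  (M₁ M₂ : F →L[ℝ] F)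
  left_mem : a ∈ Q
  right_mem : b ∈ Q
  norm_left_sub_le : ‖a - z₀‖ ≤ s
  norm_right_sub_le : ‖b - z₀‖ ≤ s
  left_penalty_le : m * ‖a - α‖ ^ 2 ≤ s
  right_penalty_le : m * ‖b - β‖ ^ 2 ≤ s
  inner_le : ⟪B (α - β), α - β⟫ ≤ s
  norm_left_error_le : ‖e₁‖ ≤ s
  norm_right_error_le : ‖e₂‖ ≤ s
  left_majorant : IsQuadraticMajorantOn Q u a (B (α - β) + e₁) M₁
  right_majorant : IsQuadraticMajorantOn Q v b (-B (α - β) + e₂) M₂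
  hessian_le : ∀ e e', ⟪M₁ e, e⟫ + ⟪M₂ e', e'⟫ ≤
    ⟪B (e - e'), e - e'⟫ + s * (‖e‖ ^ 2 + ‖e'‖ ^ 2)

theorem norm_sub_sq_le_three_mul {E : Type*} [SeminormedAddCommGroup E] (a b α β : E) :
    ‖a - b‖ ^ 2 ≤ 3 * (‖a - α‖ ^ 2 + ‖b - β‖ ^ 2 + ‖α - β‖ ^ 2) := by
  have htri : ‖a - b‖ ≤ ‖a - α‖ + ‖α - β‖ + ‖b - β‖ := by
    rw [norm_sub_rev b β, show a - b = a - α + (α - β) + (β - b) by abel]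
    exact norm_add₃_le
  have hsq : ‖a - b‖ ^ 2 ≤ (‖a - α‖ + ‖α - β‖ + ‖b - β‖) ^ 2 := by gcongr
  linarith [sq_nonneg (‖a - α‖ - ‖α - β‖), sq_nonneg (‖a - α‖ - ‖b - β‖),
    sq_nonneg (‖α - β‖ - ‖b - β‖)]

theorem exists_forall_norm_sub_lt_of_penalty_le {E : Type*} [SeminormedAddCommGroup E] {Q : Set E}
    {v : E → ℝ} (hQ : IsCompact Q) (hv : ContinuousOn v Q) {d ρ : ℝ} (hd : 0 < d) (hρ : 0 < ρ) :
    ∃ k : ℝ, 1 ≤ k ∧ ∀ a ∈ Q, ∀ b ∈ Q, ∀ α β : E,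
      k / 2 * (‖a - α‖ ^ 2 + ‖b - β‖ ^ 2 + ‖α - β‖ ^ 2) ≤ v b - v a + 1 →
        ‖a - b‖ < d ∧ v b - v a < ρ := by
  obtain ⟨M, hM⟩ := hQ.exists_bound_of_continuousOn hv
  obtain ⟨δ, hδ, hvδ⟩ := Metric.uniformContinuousOn_iff.1
    (hQ.uniformContinuousOn_of_continuous hv) ρ hρ
  set r := min δ d
  have hr : 0 < r := lt_min hδ hd
  set k := max 1 (6 * (2 * M + 1) / r ^ 2 + 1)
  have hk : 1 ≤ k := le_max_left _ _
  have hkr : 6 * (2 * M + 1) < k * r ^ 2 := by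
    rw [← div_lt_iff₀ (by positivity)]
    linarith [le_max_right 1 (6 * (2 * M + 1) / r ^ 2 + 1)]
  refine ⟨k, hk, fun a ha b hb α β hle => ?_⟩
  have hab : ‖a - b‖ < r := by
    refine lt_of_pow_lt_pow_left₀ 2 hr.le (lt_of_mul_lt_mul_left ?_ (zero_le_one.trans hk))
    have hsq := mul_le_mul_of_nonneg_left (norm_sub_sq_le_three_mul a b α β)
      (zero_le_one.trans hk)
    linarith [abs_le.1 (hM a ha), abs_le.1 (hM b hb)]
  refine ⟨hab.trans_le (min_le_right _ _), (le_abs_self _).trans_lt (hvδ b hb a ha ?_)⟩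
  rw [dist_comm, dist_eq_norm]
  exact hab.trans_le (min_le_left _ _)

theorem nonempty_doubledJets_of_isSuperjetOn {s m : ℝ} {B : F →L[ℝ] F}
    {z₀ a b α β p₁ p₂ : F} {A₁ A₂ : F →L[ℝ] F} (hs : 0 < s) (ha : a ∈ Q) (hb : b ∈ Q)
    (haz : ‖a - z₀‖ ≤ s / 2) (hab : ‖a - b‖ ≤ s / 2) (hma : m * ‖a - α‖ ^ 2 ≤ s)
    (hmb : m * ‖b - β‖ ^ 2 ≤ s) (hB : ⟪B (α - β), α - β⟫ ≤ s) (hs1 : s ≤ 1)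
    (hp₁ : ‖p₁‖ ≤ s / 2) (hp₂ : ‖p₂‖ ≤ s)
    (hju : IsSuperjetOn Q (fun z => u z - s / 4 * ‖z - z₀‖ ^ 2) a (B (α - β) + p₁) A₁)
    (hjv : IsSuperjetOn Q v b (-B (α - β) + p₂) A₂)
    (hA : ∀ e e', ⟪A₁ e, e⟫ + ⟪A₂ e', e'⟫ ≤ ⟪B (e - e'), e - e'⟫) :
    Nonempty (DoubledJets Q u v z₀ s m B) := ⟨{
  a, b, α, β
  e₁ := p₁ + (2 * (s / 4)) • (a - z₀)
  e₂ := p₂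
  M₁ := A₁ + (2 * (s / 4)) • ContinuousLinearMap.id ℝ F +
    (2 * (s / 4)) • ContinuousLinearMap.id ℝ F
  M₂ := A₂ + (2 * (s / 4)) • ContinuousLinearMap.id ℝ F
  left_mem := ha
  right_mem := hb
  norm_left_sub_le := by linarith
  norm_right_sub_le := by
    have htri := norm_sub_le_norm_sub_add_norm_sub b a z₀
    rw [norm_sub_rev b a] at htri
    linarith
  left_penalty_le := hma
  right_penalty_le := hmb
  inner_le := hB
  norm_left_error_le := by
    refine (norm_add_le _ _).trans ?_
    rw [norm_smul, Real.norm_of_nonneg (by positivity)]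
    nlinarith
  norm_right_error_le := hp₂
  left_majorant := by
    rw [← add_assoc]
    exact hju.of_sub_sq.isQuadraticMajorantOn (by positivity)
  right_majorant := hjv.isQuadraticMajorantOn (by positivity)
  hessian_le := fun e e' => by
    have hsum := hA e e'
    simp only [add_apply, smul_apply, ContinuousLinearMap.id_apply, inner_add_left,
      real_inner_smul_left, real_inner_self_eq_norm_sq]
    have hsq : 0 ≤ s * ‖e'‖ ^ 2 := by positivity
    linarith }⟩

theorem exists_doubledJets [FiniteDimensional ℝ F] (hQ : IsCompact Q) {z₀ : F} (hz₀ : z₀ ∈ Q)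
    (hu : ContinuousOn u Q) (hv : ContinuousOn v Q)
    (hmax : ∀ z ∈ Q, u z + v z ≤ u z₀ + v z₀) {s : ℝ} (hs : 0 < s) (hs1 : s ≤ 1) :
    ∃ k : ℝ, 1 ≤ k ∧ ∀ (m : ℝ) (B : F →L[ℝ] F), k ≤ m → B.IsPositive →
      (∀ x, k * ‖x‖ ^ 2 ≤ ⟪B x, x⟫) → Nonempty (DoubledJets Q u v z₀ s m B) := by
  set ρ := s ^ 3 / 32 with hρ
  have hρ0 : 0 < ρ := by positivity
  have hs3 : s ^ 3 ≤ s := pow_le_of_le_one hs.le hs1 three_ne_zero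
  obtain ⟨k, hk, hclose⟩ := exists_forall_norm_sub_lt_of_penalty_le hQ hv (half_pos hs) hρ0
  refine ⟨k, hk, fun m B hm hB hkB => ?_⟩
  have hm0 : 0 < m := by linarith
  -- The perturbation `-s/4 ‖· - z₀‖²` makes `z₀` a strict maximum, which keeps `a` close to `z₀`.
  obtain ⟨a, ha, b, hb, α, β, p₁, p₂, A₁, A₂, hp₁, hp₂, hju, hjv, hA, hle⟩ :=
    exists_isSuperjetOn_of_add hQ ⟨z₀, hz₀⟩ (u := fun z => u z - s / 4 * ‖z - z₀‖ ^ 2)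
      (hu.sub (by fun_prop)) hv hB hm0 hρ0
  have hle₀ := hle z₀ hz₀
  simp only [sub_self, norm_zero] at hle₀
  have hmax_a := hmax a ha
  have hsq : 0 ≤ s / 4 * ‖a - z₀‖ ^ 2 := by positivity
  have hma : 0 ≤ m * ‖a - α‖ ^ 2 := by positivity
  have hmb : 0 ≤ m * ‖b - β‖ ^ 2 := by positivity
  have hB0 := hB.inner_nonneg_left (α - β)
  obtain ⟨hab, hvab⟩ := hclose a ha b hb α β (by
    have hka : k * ‖a - α‖ ^ 2 ≤ m * ‖a - α‖ ^ 2 := by gcongr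
    have hkb : k * ‖b - β‖ ^ 2 ≤ m * ‖b - β‖ ^ 2 := by gcongr
    linarith [hkB (α - β)])
  have haz : ‖a - z₀‖ ≤ s / 2 := by
    refine le_of_sq_le_sq (le_of_mul_le_mul_left ?_ (by positivity : 0 < s / 4)) (by positivity)
    linarith
  exact nonempty_doubledJets_of_isSuperjetOn hs ha hb haz hab.le (by linarith) (by linarith)
    (by linarith) hs1 (by linarith) (by linarith) hju hjv hA

end DoubledJets

section TestFunctions

variable {n : ℕ} {φ ψ : ℝ → Eucl n → ℝ} {t : ℝ} {x : Eucl n}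

theorem timeDeriv_congr (h : ∀ᶠ z in 𝓝 (t, x), ψ z.1 z.2 = φ z.1 z.2) :
    timeDeriv ψ t x = timeDeriv φ t x :=
  EventuallyEq.deriv_eq ((Continuous.prodMk_left x).tendsto t |>.eventually h)

theorem spaceGrad_congr (h : ∀ᶠ z in 𝓝 (t, x), ψ z.1 z.2 = φ z.1 z.2) :
    spaceGrad ψ t x = spaceGrad φ t x :=
  EventuallyEq.gradient_eq ((Continuous.prodMk_right t).tendsto x |>.eventually h)

theorem spaceHess_congr (h : ∀ᶠ z in 𝓝 (t, x), ψ z.1 z.2 = φ z.1 z.2) :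
    spaceHess ψ t x = spaceHess φ t x := by
  have hx : (fun y => ψ t y) =ᶠ[𝓝 x] fun y => φ t y :=
    (Continuous.prodMk_right t).tendsto x |>.eventually h
  ext i j
  have hD : (fun y => fderiv ℝ (fun y' => ψ t y') y (EuclideanSpace.single j (1 : ℝ)))
      =ᶠ[𝓝 x] fun y => fderiv ℝ (fun y' => φ t y') y (EuclideanSpace.single j (1 : ℝ)) :=
    (hx.fderiv (𝕜 := ℝ)).mono fun y hy => congrArg (fun L => L (EuclideanSpace.single j 1)) hy
  simp only [spaceHess, Matrix.of_apply, hD.fderiv_eq]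

theorem timeDeriv_sub_const (c : ℝ) :
    timeDeriv (fun s y => φ s y - c) t x = timeDeriv φ t x := by
  simp [timeDeriv]

theorem spaceGrad_sub_const (c : ℝ) :
    spaceGrad (fun s y => φ s y - c) t x = spaceGrad φ t x := by
  simp [spaceGrad, gradient, fderiv_sub_const]

theorem spaceHess_sub_const (c : ℝ) :
    spaceHess (fun s y => φ s y - c) t x = spaceHess φ t x := by
  ext i j
  simp [spaceHess, fderiv_sub_const]

theorem timeDeriv_neg : timeDeriv (fun s y => -φ s y) t x = -timeDeriv φ t x := by
  simp [timeDeriv]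

theorem spaceGrad_neg : spaceGrad (fun s y => -φ s y) t x = -spaceGrad φ t x := by
  simp [spaceGrad, gradient, fderiv_fun_neg]

theorem spaceHess_neg : spaceHess (fun s y => -φ s y) t x = -spaceHess φ t x := by
  ext i j
  simp [spaceHess, fderiv_fun_neg]

theorem differentiable_time (hφ : ContDiff ℝ 3 fun z : ℝ × Eucl n => φ z.1 z.2) (x : Eucl n) :
    Differentiable ℝ fun s => φ s x :=
  (hφ.comp (contDiff_prodMk_left x)).differentiable (by norm_num)

theorem contDiff_space (hφ : ContDiff ℝ 3 fun z : ℝ × Eucl n => φ z.1 z.2) (t : ℝ) :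
    ContDiff ℝ 3 fun y => φ t y :=
  hφ.comp (contDiff_prodMk_right t)

theorem timeDeriv_add (hφ : ContDiff ℝ 3 fun z : ℝ × Eucl n => φ z.1 z.2)
    (hψ : ContDiff ℝ 3 fun z : ℝ × Eucl n => ψ z.1 z.2) :
    timeDeriv (fun s y => φ s y + ψ s y) t x = timeDeriv φ t x + timeDeriv ψ t x :=
  deriv_fun_add (differentiable_time hφ x t) (differentiable_time hψ x t)

theorem spaceGrad_add (hφ : ContDiff ℝ 3 fun z : ℝ × Eucl n => φ z.1 z.2)
    (hψ : ContDiff ℝ 3 fun z : ℝ × Eucl n => ψ z.1 z.2) :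
    spaceGrad (fun s y => φ s y + ψ s y) t x = spaceGrad φ t x + spaceGrad ψ t x := by
  simp only [spaceGrad, gradient]
  rw [fderiv_fun_add ((contDiff_space hφ t).differentiable (by norm_num) x)
    ((contDiff_space hψ t).differentiable (by norm_num) x), map_add]

theorem spaceHess_add (hφ : ContDiff ℝ 3 fun z : ℝ × Eucl n => φ z.1 z.2)
    (hψ : ContDiff ℝ 3 fun z : ℝ × Eucl n => ψ z.1 z.2) :
    spaceHess (fun s y => φ s y + ψ s y) t x = spaceHess φ t x + spaceHess ψ t x := by
  have hD {g : ℝ → Eucl n → ℝ} (hg : ContDiff ℝ 3 fun z : ℝ × Eucl n => g z.1 z.2)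
      (e : Eucl n) : DifferentiableAt ℝ (fun y => fderiv ℝ (fun y' => g t y') y e) x :=
    (((contDiff_space hg t).fderiv_right (m := 2) (by norm_num)).clm_apply
      contDiff_const).differentiable (by norm_num) x
  ext i j
  have hadd (y : Eucl n) := fderiv_fun_add ((contDiff_space hφ t).differentiable (by norm_num) y)
    ((contDiff_space hψ t).differentiable (by norm_num) y)
  simp only [spaceHess, Matrix.of_apply, Matrix.add_apply, hadd, add_apply]
  rw [fderiv_fun_add (hD hφ _) (hD hψ _), add_apply]

theorem IsTestFunction.neg (hφ : IsTestFunction φ) : IsTestFunction fun s y => -φ s y := by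
  refine ⟨hφ.1.neg, fun i hi hi' => ?_⟩
  obtain ⟨M, hM⟩ := hφ.2 i hi hi'
  refine ⟨M, fun z => ?_⟩
  rw [show (fun q : ℝ × Eucl n => -φ q.1 q.2) = -fun q : ℝ × Eucl n => φ q.1 q.2 from rfl,
    iteratedFDeriv_neg_apply, norm_neg]
  exact hM z

theorem exists_isTestFunction_eventuallyEq {g : ℝ × Eucl n → ℝ} (hg : ContDiff ℝ 3 g)
    (z₀ : ℝ × Eucl n) : ∃ ψ, IsTestFunction ψ ∧ ∀ᶠ z in 𝓝 z₀, ψ z.1 z.2 = g z := by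
  let χ : ContDiffBump z₀ := ⟨1, 2, one_pos, one_lt_two⟩
  have hχg : ContDiff ℝ 3 (fun z => χ z * g z) := χ.contDiff.mul hg
  have hsupp : HasCompactSupport (fun z => χ z * g z) := χ.hasCompactSupport.mul_right
  refine ⟨fun t x => χ (t, x) * g (t, x), ⟨hχg, fun i _ hi => ?_⟩, ?_⟩
  · exact (hsupp.iteratedFDeriv i).exists_bound_of_continuous
      (hχg.continuous_iteratedFDeriv (by exact_mod_cast hi))
  · filter_upwards [χ.eventuallyEq_one] with z hz
    simp only [Prod.mk.eta, hz, Pi.one_apply, one_mul]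

theorem continuous_timeDeriv (hφ : ContDiff ℝ 3 fun z : ℝ × Eucl n => φ z.1 z.2) :
    Continuous fun z : ℝ × Eucl n => timeDeriv φ z.1 z.2 := by
  have heq (z : ℝ × Eucl n) : timeDeriv φ z.1 z.2 =
      fderiv ℝ (fun z : ℝ × Eucl n => φ z.1 z.2) z (1, 0) := by
    have hline : HasDerivAt (fun s : ℝ => (s, z.2)) ((1, 0) : ℝ × Eucl n) z.1 :=
      (hasDerivAt_id _).prodMk (hasDerivAt_const _ _)
    have hz : HasFDerivAt (fun z : ℝ × Eucl n => φ z.1 z.2) _ z :=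
      (hφ.differentiable (by norm_num) z).hasFDerivAt
    exact (hz.comp_hasDerivAt z.1 hline).deriv
  simp only [heq]
  exact (hφ.continuous_fderiv (by norm_num)).clm_apply continuous_const

theorem fderiv_space_eq {g : ℝ × Eucl n → ℝ} {z : ℝ × Eucl n} (hg : DifferentiableAt ℝ g z) :
    fderiv ℝ (fun y => g (z.1, y)) z.2 = (fderiv ℝ g z).comp (.inr ℝ ℝ _) :=
  (hg.hasFDerivAt.comp z.2 (hasFDerivAt_prodMk_right z.1 z.2)).fderiv

theorem continuous_spaceGrad (hφ : ContDiff ℝ 3 fun z : ℝ × Eucl n => φ z.1 z.2) :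
    Continuous fun z : ℝ × Eucl n => spaceGrad φ z.1 z.2 := by
  have heq (z : ℝ × Eucl n) : spaceGrad φ z.1 z.2 = (InnerProductSpace.toDual ℝ (Eucl n)).symm
      ((fderiv ℝ (fun z : ℝ × Eucl n => φ z.1 z.2) z).comp (.inr ℝ ℝ _)) :=
    congrArg _ (fderiv_space_eq (hφ.differentiable (by norm_num) z))
  simp only [heq]
  exact (LinearIsometryEquiv.continuous _).comp
    ((hφ.continuous_fderiv (by norm_num)).clm_comp continuous_const)

theorem continuous_spaceHess (hφ : ContDiff ℝ 3 fun z : ℝ × Eucl n => φ z.1 z.2) :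
    Continuous fun z : ℝ × Eucl n => spaceHess φ z.1 z.2 := by
  refine continuous_matrix fun i j => ?_
  set ei : Eucl n := EuclideanSpace.single i 1
  set ej : Eucl n := EuclideanSpace.single j 1
  have hDj : ContDiff ℝ 2 fun z => fderiv ℝ (fun z : ℝ × Eucl n => φ z.1 z.2) z (0, ej) :=
    (hφ.fderiv_right (by norm_num)).clm_apply contDiff_const
  have heq (z : ℝ × Eucl n) : spaceHess φ z.1 z.2 i j =
      fderiv ℝ (fun z => fderiv ℝ (fun z : ℝ × Eucl n => φ z.1 z.2) z (0, ej)) z (0, ei) := by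
    have hj (y : Eucl n) : fderiv ℝ (fun y' => φ z.1 y') y ej =
        fderiv ℝ (fun z : ℝ × Eucl n => φ z.1 z.2) (z.1, y) (0, ej) :=
      congrArg (fun L => L ej)
        (fderiv_space_eq (z := (z.1, y)) (hφ.differentiable (by norm_num) _))
    simp only [spaceHess, Matrix.of_apply]
    simp only [ei, ej, hj]
    exact congrArg (fun L => L ei) (fderiv_space_eq (hDj.differentiable (by norm_num) z))
  simp only [heq]
  exact (hDj.continuous_fderiv (by norm_num)).clm_apply continuous_const

end TestFunctions

section QuadraticPolynomials

variable {n d : ℕ} {t : ℝ} {x : Eucl n}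

/-- The symmetric matrix of the quadratic form `e ↦ ⟪N e, e⟫`. -/
def quadMatrix (N : Eucl n →L[ℝ] Eucl n) : Matrix (Fin n) (Fin n) ℝ :=
  Matrix.of fun i j => 1 / 2 *
    (⟪N (EuclideanSpace.single i 1), EuclideanSpace.single j 1⟫ +
      ⟪N (EuclideanSpace.single j 1), EuclideanSpace.single i 1⟫)

/-- The `k`-th column of a matrix as a Euclidean vector, so that `|σ|² = ∑ₖ |σₖ|²`. -/
def column (σ : Matrix (Fin n) (Fin d) ℝ) (k : Fin d) : Eucl n :=
  WithLp.toLp 2 fun i => σ i k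

theorem column_sub (σ σ' : Matrix (Fin n) (Fin d) ℝ) (k : Fin d) :
    column (σ - σ') k = column σ k - column σ' k := rfl

theorem norm_sq_eq_sum_column (σ : Matrix (Fin n) (Fin d) ℝ) :
    ‖σ‖ ^ 2 = ∑ k, ‖column σ k‖ ^ 2 := by
  rw [Matrix.frobenius_norm_def, ← Real.sqrt_eq_rpow, Real.sq_sqrt (by positivity),
    Finset.sum_comm]
  exact Finset.sum_congr rfl fun k _ => by simp [EuclideanSpace.norm_sq_eq, column]

theorem inner_map_column (N : Eucl n →L[ℝ] Eucl n) (σ : Matrix (Fin n) (Fin d) ℝ) (k : Fin d) :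
    ⟪N (column σ k), column σ k⟫ = ∑ i, ∑ j, σ i k * σ j k *
      ⟪N (EuclideanSpace.single i 1), EuclideanSpace.single j 1⟫ := by
  have hcol : column σ k = ∑ i, σ i k • EuclideanSpace.single i (1 : ℝ) := by
    ext j
    simp [column, Finset.sum_apply, Pi.single_apply]
  rw [hcol, map_sum, sum_inner]
  refine Finset.sum_congr rfl fun i _ => ?_
  rw [inner_sum]
  refine Finset.sum_congr rfl fun j _ => ?_
  rw [map_smul, real_inner_smul_left, real_inner_smul_right, mul_assoc]

theorem trace_mul_quadMatrix (σ : Matrix (Fin n) (Fin d) ℝ) (N : Eucl n →L[ℝ] Eucl n) :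
    Matrix.trace (σ * σᵀ * quadMatrix N) = ∑ k, ⟪N (column σ k), column σ k⟫ := by
  set A : Matrix (Fin n) (Fin n) ℝ := Matrix.of fun i j =>
    ⟪N (EuclideanSpace.single j 1), EuclideanSpace.single i 1⟫ with hA
  have hquad : quadMatrix N = (1 / 2 : ℝ) • (Aᵀ + A) := by
    ext i j
    simp [quadMatrix, hA]
  have htranspose : Matrix.trace (σ * σᵀ * Aᵀ) = Matrix.trace (σ * σᵀ * A) := by
    rw [← Matrix.trace_transpose, Matrix.transpose_mul, Matrix.transpose_transpose,
      Matrix.transpose_mul, Matrix.transpose_transpose, Matrix.trace_mul_comm]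
  have htrace : Matrix.trace (σ * σᵀ * A) = ∑ k, ⟪N (column σ k), column σ k⟫ := by
    simp only [inner_map_column, Matrix.trace, Matrix.diag_apply, Matrix.mul_apply,
      Matrix.transpose_apply, Finset.sum_mul, hA, Matrix.of_apply]
    rw [Finset.sum_comm_cycle]
  rw [hquad, Matrix.mul_smul, Matrix.trace_smul, Matrix.mul_add, Matrix.trace_add, htranspose,
    htrace, smul_eq_mul]
  ring

variable {q : ℝ → Eucl n → ℝ} {p : Eucl n} {N : Eucl n →L[ℝ] Eucl n}

theorem timeDeriv_of_eq_quadratic {c m : ℝ} (hq : ∀ s, q s x = c * (s - t) + m * (s - t) ^ 2) :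
    timeDeriv q t x = c := by
  have hderiv := (((hasDerivAt_id t).sub_const t).const_mul c).fun_add
    ((((hasDerivAt_id t).sub_const t).pow 2).const_mul m)
  simp only [timeDeriv, hq]
  simpa using hderiv.deriv

theorem hasFDerivAt_quadratic (p : Eucl n) (N : Eucl n →L[ℝ] Eucl n) (x y : Eucl n) :
    HasFDerivAt (fun y => ⟪p, y - x⟫ + 1 / 2 * ⟪N (y - x), y - x⟫)
      (innerSL ℝ p + (1 / 2 : ℝ) • (innerSL ℝ (N (y - x)) + (innerSL ℝ (y - x)).comp N)) y := by
  have hsub : HasFDerivAt (fun y : Eucl n => y - x) (.id ℝ _) y := (hasFDerivAt_id y).sub_const x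
  refine (((hasFDerivAt_const p y).inner ℝ hsub).add
    (((N.hasFDerivAt.comp y hsub).inner ℝ hsub).const_mul (1 / 2))).congr_fderiv ?_
  ext v
  simp [real_inner_comm, inner_sub_left, inner_sub_right]
  ring

theorem spaceGrad_of_eq_quadratic
    (hq : ∀ y, q t y = ⟪p, y - x⟫ + 1 / 2 * ⟪N (y - x), y - x⟫) : spaceGrad q t x = p := by
  simp only [spaceGrad, hq]
  refine HasGradientAt.gradient (hasGradientAt_iff_hasFDerivAt.2 ?_)
  refine (hasFDerivAt_quadratic p N x x).congr_fderiv ?_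
  ext v
  simp

theorem spaceHess_of_eq_quadratic
    (hq : ∀ y, q t y = ⟪p, y - x⟫ + 1 / 2 * ⟪N (y - x), y - x⟫) :
    spaceHess q t x = quadMatrix N := by
  ext i j
  simp only [spaceHess, Matrix.of_apply, quadMatrix, hq, (hasFDerivAt_quadratic p N x _).fderiv]
  set ei : Eucl n := EuclideanSpace.single i 1
  set ej : Eucl n := EuclideanSpace.single j 1
  have hsub : HasFDerivAt (fun y : Eucl n => y - x) (.id ℝ _) x := (hasFDerivAt_id x).sub_const x
  have hderiv := ((((N.hasFDerivAt.comp x hsub).inner ℝ (hasFDerivAt_const ej x)).add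
    (hsub.inner ℝ (hasFDerivAt_const (N ej) x))).const_mul (1 / 2)).const_add ⟪p, ej⟫
  refine (congrArg (fun L => L ei) hderiv.fderiv).trans ?_
  simp [real_inner_comm, mul_add]

end QuadraticPolynomials

section ParabolicSuperjets

variable {n : ℕ} {T : ℝ} {u φ : ℝ → Eucl n → ℝ} {t a : ℝ} {x p : Eucl n}
  {X : Matrix (Fin n) (Fin n) ℝ}

/-- `(a, p, X)` is the triple `(∂ₜψ, Dψ, D²ψ)(t, x)` of a test function `ψ` touching `u` from above
at `(t, x)` relative to `[0,T] × ℝⁿ`, normalized by `ψ(t, x) = 0`. -/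
def HasParabolicSuperjet (T : ℝ) (u : ℝ → Eucl n → ℝ) (t : ℝ) (x : Eucl n) (a : ℝ) (p : Eucl n)
    (X : Matrix (Fin n) (Fin n) ℝ) : Prop :=
  ∃ ψ, IsTestFunction ψ ∧
    IsLocalMaxOn (fun z : ℝ × Eucl n => u z.1 z.2 - ψ z.1 z.2) (Icc 0 T ×ˢ univ) (t, x) ∧
    ψ t x = 0 ∧ timeDeriv ψ t x = a ∧ spaceGrad ψ t x = p ∧ spaceHess ψ t x = X

theorem hasParabolicSuperjet_of_contDiff (hφ : ContDiff ℝ 3 fun z : ℝ × Eucl n => φ z.1 z.2)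
    (hmax : IsLocalMaxOn (fun z : ℝ × Eucl n => u z.1 z.2 - φ z.1 z.2)
      (Icc 0 T ×ˢ univ) (t, x)) :
    HasParabolicSuperjet T u t x (timeDeriv φ t x) (spaceGrad φ t x) (spaceHess φ t x) := by
  obtain ⟨ψ, hψ, heq⟩ := exists_isTestFunction_eventuallyEq (hφ.sub contDiff_const) (t, x)
  have h₀ : ψ t x = φ t x - φ t x := heq.self_of_nhds
  refine ⟨ψ, hψ, ?_, h₀.trans (sub_self _), ?_, ?_, ?_⟩
  · filter_upwards [hmax, heq.filter_mono nhdsWithin_le_nhds] with z hz hψz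
    rw [hψz, h₀]
    linarith
  · rw [timeDeriv_congr (φ := fun s y => φ s y - φ t x) heq, timeDeriv_sub_const]
  · rw [spaceGrad_congr (φ := fun s y => φ s y - φ t x) heq, spaceGrad_sub_const]
  · rw [spaceHess_congr (φ := fun s y => φ s y - φ t x) heq, spaceHess_sub_const]

namespace HasParabolicSuperjet

theorem add_of_sub (h : HasParabolicSuperjet T (fun s y => u s y - φ s y) t x a p X)
    (hφ : ContDiff ℝ 3 fun z : ℝ × Eucl n => φ z.1 z.2) :
    HasParabolicSuperjet T u t x (timeDeriv φ t x + a) (spaceGrad φ t x + p)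
      (spaceHess φ t x + X) := by
  obtain ⟨ψ, hψ, hmax, -, rfl, rfl, rfl⟩ := h
  rw [← timeDeriv_add hφ hψ.1, ← spaceGrad_add hφ hψ.1, ← spaceHess_add hφ hψ.1]
  refine hasParabolicSuperjet_of_contDiff (hφ.add hψ.1) ?_
  simpa only [sub_sub] using hmax

variable {G : ℝ → Eucl n → ℝ → Eucl n → Matrix (Fin n) (Fin n) ℝ → ℝ} {g : Eucl n → ℝ}

theorem nonneg_of_isViscositySubsolution (h : HasParabolicSuperjet T u t x a p X)
    (hu : IsViscositySubsolution T G g u) (ht : t ∈ Ico 0 T) : 0 ≤ a + G t x 0 p X := by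
  obtain ⟨ψ, hψ, hmax, h₀, rfl, rfl, rfl⟩ := h
  simpa only [h₀] using hu.2 ψ hψ t ht x hmax

theorem nonpos_of_isViscositySupersolution
    (h : HasParabolicSuperjet T (fun s y => -u s y) t x a p X)
    (hu : IsViscositySupersolution T G g u) (ht : t ∈ Ico 0 T) : -a + G t x 0 (-p) (-X) ≤ 0 := by
  obtain ⟨ψ, hψ, hmax, h₀, rfl, rfl, rfl⟩ := h
  have hmin : IsLocalMinOn (fun z : ℝ × Eucl n => u z.1 z.2 - -ψ z.1 z.2)
      (Icc 0 T ×ˢ univ) (t, x) := by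
    filter_upwards [hmax] with z hz
    linarith
  simpa only [h₀, neg_zero, timeDeriv_neg, spaceGrad_neg, spaceHess_neg] using
    hu.2 _ hψ.neg t ht x hmin

end HasParabolicSuperjet

end ParabolicSuperjets

section SpaceTime

variable {n : ℕ}

/-- Space-time `ℝ × ℝⁿ` with its Euclidean structure; the product type carries the sup norm. -/
abbrev SpaceTime (n : ℕ) := WithLp 2 (ℝ × Eucl n)

/-- The identity from `ℝ × ℝⁿ` to Euclidean space-time. -/
def toSpaceTime (n : ℕ) : (ℝ × Eucl n) ≃L[ℝ] SpaceTime n :=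
  (WithLp.prodContinuousLinearEquiv 2 ℝ ℝ (Eucl n)).symm

theorem inner_eq_fst_snd (y z : SpaceTime n) : ⟪y, z⟫ = y.fst * z.fst + ⟪y.snd, z.snd⟫ := by
  simp [WithLp.prod_inner_apply, mul_comm]

theorem norm_sq_eq_fst_snd (z : SpaceTime n) : ‖z‖ ^ 2 = z.fst ^ 2 + ‖z.snd‖ ^ 2 := by
  simp [WithLp.prod_norm_sq_eq_of_L2]

/-- The inclusion of space into space-time, whose adjoint is the projection `WithLp.sndL`. -/
def spaceInclusion (n : ℕ) : Eucl n →L[ℝ] SpaceTime n :=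
  (toSpaceTime n).toContinuousLinearMap.comp (.inr ℝ ℝ (Eucl n))

/-- The spatial block of an operator on space-time. -/
def spatialBlock (M : SpaceTime n →L[ℝ] SpaceTime n) : Eucl n →L[ℝ] Eucl n :=
  (WithLp.sndL 2 ℝ ℝ (Eucl n)).comp (M.comp (spaceInclusion n))

@[simp] theorem spaceInclusion_fst (e : Eucl n) : (spaceInclusion n e).fst = 0 := rfl

@[simp] theorem spaceInclusion_snd (e : Eucl n) : (spaceInclusion n e).snd = e := rfl

theorem inner_spatialBlock (M : SpaceTime n →L[ℝ] SpaceTime n) (e e' : Eucl n) :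
    ⟪spatialBlock M e, e'⟫ = ⟪M (spaceInclusion n e), spaceInclusion n e'⟫ := by
  simp [spatialBlock]

theorem norm_spaceInclusion (e : Eucl n) : ‖spaceInclusion n e‖ = ‖e‖ :=
  (sq_eq_sq₀ (norm_nonneg _) (norm_nonneg _)).1 (by simp [norm_sq_eq_fst_snd])

/-- The quadratic polynomial on space-time vanishing at `a`, with gradient `p` and Hessian `M`
there, as a function of time and space. -/
def quadraticAt (a p : SpaceTime n) (M : SpaceTime n →L[ℝ] SpaceTime n) (s : ℝ) (y : Eucl n) : ℝ :=
  ⟪p, toSpaceTime n (s, y) - a⟫ +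
    1 / 2 * ⟪M (toSpaceTime n (s, y) - a), toSpaceTime n (s, y) - a⟫

section QuadraticAt

variable (a p : SpaceTime n) (M : SpaceTime n →L[ℝ] SpaceTime n)

theorem contDiff_quadraticAt : ContDiff ℝ 3 fun z : ℝ × Eucl n => quadraticAt a p M z.1 z.2 := by
  have hsub : ContDiff ℝ 3 fun z : ℝ × Eucl n => toSpaceTime n (z.1, z.2) - a :=
    ((toSpaceTime n).contDiff.comp (by fun_prop)).sub contDiff_const
  exact (contDiff_const.inner ℝ hsub).add
    (contDiff_const.mul ((M.contDiff.comp hsub).inner ℝ hsub))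

theorem quadraticAt_fst (y : Eucl n) : quadraticAt a p M a.fst y =
    ⟪p.snd, y - a.snd⟫ + 1 / 2 * ⟪spatialBlock M (y - a.snd), y - a.snd⟫ := by
  have hincl : toSpaceTime n (a.fst, y) - a = spaceInclusion n (y - a.snd) :=
    WithLp.ofLp_injective 2 (Prod.ext (sub_self a.fst) rfl)
  simp only [quadraticAt, hincl, inner_spatialBlock, inner_eq_fst_snd p, spaceInclusion_fst,
    spaceInclusion_snd, mul_zero, zero_add]

theorem timeDeriv_quadraticAt : timeDeriv (quadraticAt a p M) a.fst a.snd = p.fst := by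
  set e₀ := toSpaceTime n (1, 0)
  refine timeDeriv_of_eq_quadratic (m := 1 / 2 * ⟪M e₀, e₀⟫) fun s => ?_
  have hline : toSpaceTime n (s, a.snd) - a = (s - a.fst) • e₀ :=
    WithLp.ofLp_injective 2 (Prod.ext (by simp [e₀, toSpaceTime]) (by simp [e₀, toSpaceTime]))
  have hinner : ⟪p, e₀⟫ = p.fst := by simp [inner_eq_fst_snd p, e₀, toSpaceTime]
  simp only [quadraticAt, hline, map_smul, real_inner_smul_left, real_inner_smul_right, hinner]
  ring

theorem spaceGrad_quadraticAt : spaceGrad (quadraticAt a p M) a.fst a.snd = p.snd :=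
  spaceGrad_of_eq_quadratic (quadraticAt_fst a p M)

theorem spaceHess_quadraticAt :
    spaceHess (quadraticAt a p M) a.fst a.snd = quadMatrix (spatialBlock M) :=
  spaceHess_of_eq_quadratic (quadraticAt_fst a p M)

end QuadraticAt

/-- The points of the closed ball of radius `r` around `z₀` whose time lies in `[0,T]`. -/
def timeSlab (T : ℝ) (z₀ : SpaceTime n) (r : ℝ) : Set (SpaceTime n) :=
  Metric.closedBall z₀ r ∩ {z | z.fst ∈ Icc 0 T}

theorem IsQuadraticMajorantOn.hasParabolicSuperjet {T r : ℝ} {u : ℝ → Eucl n → ℝ}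
    {z₀ a p : SpaceTime n} {M : SpaceTime n →L[ℝ] SpaceTime n} (ha : ‖a - z₀‖ < r)
    (h : IsQuadraticMajorantOn (timeSlab T z₀ r) (fun z => u z.fst z.snd) a p M) :
    HasParabolicSuperjet T u a.fst a.snd p.fst p.snd (quadMatrix (spatialBlock M)) := by
  rw [← timeDeriv_quadraticAt a p M, ← spaceGrad_quadraticAt a p M, ← spaceHess_quadraticAt a p M]
  refine hasParabolicSuperjet_of_contDiff (contDiff_quadraticAt a p M)
    (eventually_nhdsWithin_iff.2 ?_)
  have htendsto : Tendsto (toSpaceTime n) (𝓝 (a.fst, a.snd)) (𝓝 a) :=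
    (toSpaceTime n).continuous.tendsto (a.fst, a.snd)
  have hball : ∀ᶠ z in 𝓝 a, z ∈ Metric.closedBall z₀ r :=
    Metric.closedBall_mem_nhds_of_mem (by rwa [mem_ball_iff_norm])
  filter_upwards [htendsto.eventually (eventually_nhdsWithin_iff.1 h), htendsto.eventually hball]
    with z hz hzball hzT
  have hmajorant : u z.1 z.2 ≤ u a.fst a.snd + ⟪p, toSpaceTime n z - a⟫ +
    1 / 2 * ⟪M (toSpaceTime n z - a), toSpaceTime n z - a⟫ := hz ⟨hzball, hzT.1⟩
  have hzero : quadraticAt a p M a.fst a.snd = 0 := by simp [quadraticAt_fst]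
  change u z.1 z.2 - quadraticAt a p M z.1 z.2 ≤ u a.fst a.snd - quadraticAt a p M a.fst a.snd
  rw [hzero]
  simp only [quadraticAt, Prod.mk.eta]
  linarith

/-- The operator acting by `k` on the time component and by `κ` on the space component. -/
def blockScaling (n : ℕ) (k κ : ℝ) : SpaceTime n →L[ℝ] SpaceTime n :=
  (toSpaceTime n).toContinuousLinearMap.comp
    ((k • WithLp.fstL 2 ℝ ℝ (Eucl n)).prod (κ • WithLp.sndL 2 ℝ ℝ (Eucl n)))

@[simp] theorem blockScaling_fst (k κ : ℝ) (z : SpaceTime n) :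
    (blockScaling n k κ z).fst = k * z.fst := rfl

@[simp] theorem blockScaling_snd (k κ : ℝ) (z : SpaceTime n) :
    (blockScaling n k κ z).snd = κ • z.snd := rfl

theorem inner_blockScaling_self (k κ : ℝ) (z : SpaceTime n) :
    ⟪blockScaling n k κ z, z⟫ = k * z.fst ^ 2 + κ * ‖z.snd‖ ^ 2 := by
  simp only [inner_eq_fst_snd, blockScaling_fst, blockScaling_snd, real_inner_smul_left,
    real_inner_self_eq_norm_sq]
  ring

theorem isPositive_blockScaling {k κ : ℝ} (hk : 0 ≤ k) (hκ : 0 ≤ κ) :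
    (blockScaling n k κ).IsPositive := by
  refine ⟨fun y z => ?_, fun z => ?_⟩
  · simp only [ContinuousLinearMap.coe_coe, inner_eq_fst_snd, blockScaling_fst, blockScaling_snd,
      real_inner_smul_left, real_inner_smul_right]
    ring
  · simp only [ContinuousLinearMap.reApplyInnerSelf_apply, inner_blockScaling_self,
      RCLike.re_to_real]
    positivity

end SpaceTime

section Doubling

variable {n : ℕ} {T t₀ s s' m κ δ : ℝ} {x₀ : Eucl n} {w₁ w₂ : ℝ → Eucl n → ℝ}

/-- Superjets of `w₁` and `w₂` at nearby points, as produced by doubling the variables at a local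
maximum of `w₁ + w₂` with space penalization `κ`: the derivatives `c` and `κχ` of the penalization
enter with opposite signs, everything else is an error of size `s`. -/
structure CoupledSuperjets (T : ℝ) (w₁ w₂ : ℝ → Eucl n → ℝ) (t₀ : ℝ) (x₀ : Eucl n)
    (s κ δ : ℝ) where
  (t₁ t₂ c c₁ c₂ : ℝ)
  (x₁ x₂ χ p₁ p₂ : Eucl n)
  (X₁ X₂ : Matrix (Fin n) (Fin n) ℝ)
  left_time_mem : t₁ ∈ Ico 0 T
  right_time_mem : t₂ ∈ Ico 0 T
  left_time_near : |t₁ - t₀| ≤ s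
  right_time_near : |t₂ - t₀| ≤ s
  left_space_near : ‖x₁ - x₀‖ ≤ s
  right_space_near : ‖x₂ - x₀‖ ≤ s
  time_sub_le : |t₁ - t₂| ≤ δ
  space_penalty_le : κ * ‖x₁ - x₂‖ ^ 2 ≤ 9 * s
  slope_penalty_le : κ * ‖χ‖ ^ 2 ≤ s
  left_time_error_le : |c₁| ≤ s
  right_time_error_le : |c₂| ≤ s
  left_space_error_le : ‖p₁‖ ≤ s
  right_space_error_le : ‖p₂‖ ≤ s
  left_superjet : HasParabolicSuperjet T w₁ t₁ x₁ (c + c₁) (κ • χ + p₁) X₁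
  right_superjet : HasParabolicSuperjet T w₂ t₂ x₂ (-c + c₂) (-(κ • χ) + p₂) X₂
  trace_le : ∀ {d : ℕ} (σ₁ σ₂ : Matrix (Fin n) (Fin d) ℝ),
    Matrix.trace (σ₁ * σ₁ᵀ * X₁) + Matrix.trace (σ₂ * σ₂ᵀ * X₂) ≤
      κ * ‖σ₁ - σ₂‖ ^ 2 + s * (‖σ₁‖ ^ 2 + ‖σ₂‖ ^ 2)

def CoupledSuperjets.mono (h : CoupledSuperjets T w₁ w₂ t₀ x₀ s' κ δ) (hs : s' ≤ s) :
    CoupledSuperjets T w₁ w₂ t₀ x₀ s κ δ where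
  __ := h
  left_time_near := h.left_time_near.trans hs
  right_time_near := h.right_time_near.trans hs
  left_space_near := h.left_space_near.trans hs
  right_space_near := h.right_space_near.trans hs
  space_penalty_le := h.space_penalty_le.trans (by gcongr)
  slope_penalty_le := h.slope_penalty_le.trans hs
  left_time_error_le := h.left_time_error_le.trans hs
  right_time_error_le := h.right_time_error_le.trans hs
  left_space_error_le := h.left_space_error_le.trans hs
  right_space_error_le := h.right_space_error_le.trans hs
  trace_le σ₁ σ₂ := (h.trace_le σ₁ σ₂).trans (by gcongr)

theorem isCompact_timeSlab (T : ℝ) (z₀ : SpaceTime n) (r : ℝ) : IsCompact (timeSlab T z₀ r) :=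
  (isCompact_closedBall z₀ r).inter_right
    (isClosed_Icc.preimage (WithLp.fstL 2 ℝ ℝ (Eucl n)).continuous)

theorem continuousOn_timeSlab
    (hw : ContinuousOn (fun z : ℝ × Eucl n => w₁ z.1 z.2) (Icc 0 T ×ˢ univ))
    (z₀ : SpaceTime n) (r : ℝ) :
    ContinuousOn (fun z : SpaceTime n => w₁ z.fst z.snd) (timeSlab T z₀ r) :=
  hw.comp (toSpaceTime n).symm.continuous.continuousOn fun _ hz => ⟨hz.2, mem_univ _⟩

theorem exists_timeSlab_forall_le
    (hmax : IsLocalMaxOn (fun z : ℝ × Eucl n => w₁ z.1 z.2) (Icc 0 T ×ˢ univ) (t₀, x₀)) :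
    ∃ r > 0, ∀ z ∈ timeSlab T (toSpaceTime n (t₀, x₀)) r, w₁ z.fst z.snd ≤ w₁ t₀ x₀ := by
  have htendsto : Tendsto (toSpaceTime n).symm (𝓝 (toSpaceTime n (t₀, x₀))) (𝓝 (t₀, x₀)) :=
    (toSpaceTime n).symm.continuous.tendsto' _ _ (ContinuousLinearEquiv.symm_apply_apply _ _)
  obtain ⟨r, hr, hball⟩ := Metric.nhds_basis_closedBall.eventually_iff.1
    (htendsto.eventually (eventually_nhdsWithin_iff.1 hmax))
  exact ⟨r, hr, fun z hz => hball hz.1 ⟨hz.2, mem_univ _⟩⟩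

theorem trace_mul_quadMatrix_add_le {d : ℕ} {M₁ M₂ : SpaceTime n →L[ℝ] SpaceTime n}
    (h : ∀ e e', ⟪M₁ e, e⟫ + ⟪M₂ e', e'⟫ ≤
      ⟪blockScaling n m κ (e - e'), e - e'⟫ + s * (‖e‖ ^ 2 + ‖e'‖ ^ 2))
    (σ₁ σ₂ : Matrix (Fin n) (Fin d) ℝ) :
    Matrix.trace (σ₁ * σ₁ᵀ * quadMatrix (spatialBlock M₁)) +
        Matrix.trace (σ₂ * σ₂ᵀ * quadMatrix (spatialBlock M₂)) ≤
      κ * ‖σ₁ - σ₂‖ ^ 2 + s * (‖σ₁‖ ^ 2 + ‖σ₂‖ ^ 2) := by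
  simp only [trace_mul_quadMatrix, norm_sq_eq_sum_column, ← Finset.sum_add_distrib,
    Finset.mul_sum]
  refine Finset.sum_le_sum fun k _ => ?_
  have hk := h (spaceInclusion n (column σ₁ k)) (spaceInclusion n (column σ₂ k))
  rw [← map_sub, inner_blockScaling_self, norm_spaceInclusion, norm_spaceInclusion,
    ← inner_spatialBlock, ← inner_spatialBlock, ← column_sub] at hk
  simpa only [spaceInclusion_fst, spaceInclusion_snd, zero_pow two_ne_zero, mul_zero, zero_add]
    using hk

namespace DoubledJets

variable {Q : Set (SpaceTime n)} {u v : SpaceTime n → ℝ} {z₀ : SpaceTime n}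
  (J : DoubledJets Q u v z₀ s m (blockScaling n m κ))
include J

theorem penalty_le : m * (J.α.fst - J.β.fst) ^ 2 + κ * ‖J.α.snd - J.β.snd‖ ^ 2 ≤ s := by
  simpa only [inner_blockScaling_self, WithLp.sub_fst, WithLp.sub_snd] using J.inner_le

theorem time_penalty_le (hm : 0 ≤ m) (hκ : 0 ≤ κ) : m * (J.a.fst - J.b.fst) ^ 2 ≤ 9 * s := by
  have htri := mul_le_mul_of_nonneg_left
    (norm_sub_sq_le_three_mul J.a.fst J.b.fst J.α.fst J.β.fst) hm
  have hleft := J.left_penalty_le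
  have hright := J.right_penalty_le
  rw [norm_sq_eq_fst_snd, WithLp.sub_fst] at hleft hright
  simp only [Real.norm_eq_abs, sq_abs] at htri
  nlinarith [J.penalty_le, mul_nonneg hκ (sq_nonneg ‖J.α.snd - J.β.snd‖),
    mul_nonneg hm (sq_nonneg ‖(J.a - J.α).snd‖), mul_nonneg hm (sq_nonneg ‖(J.b - J.β).snd‖)]

theorem space_penalty_le (hκ : 0 ≤ κ) (hκm : κ ≤ m) : κ * ‖J.a.snd - J.b.snd‖ ^ 2 ≤ 9 * s := by
  have htri := mul_le_mul_of_nonneg_left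
    (norm_sub_sq_le_three_mul J.a.snd J.b.snd J.α.snd J.β.snd) hκ
  have hmono (z : SpaceTime n) (hz : m * ‖z‖ ^ 2 ≤ s) : κ * ‖z.snd‖ ^ 2 ≤ s := by
    refine (mul_le_mul hκm ?_ (by positivity) (hκ.trans hκm)).trans hz
    rw [norm_sq_eq_fst_snd]
    linarith [sq_nonneg z.fst]
  have hleft := hmono _ J.left_penalty_le
  have hright := hmono _ J.right_penalty_le
  rw [WithLp.sub_snd] at hleft hright
  linarith [J.penalty_le, mul_nonneg (hκ.trans hκm) (sq_nonneg (J.α.fst - J.β.fst))]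

end DoubledJets

section

variable {z₀ : SpaceTime n} {r : ℝ}
  (J : DoubledJets (timeSlab T z₀ r) (fun z => w₁ z.fst z.snd) (fun z => w₂ z.fst z.snd) z₀ s m
    (blockScaling n m κ))

theorem DoubledJets.left_superjet (hsr : s < r) :
    HasParabolicSuperjet T w₁ J.a.fst J.a.snd (m * (J.α - J.β).fst + J.e₁.fst)
      (κ • (J.α - J.β).snd + J.e₁.snd) (quadMatrix (spatialBlock J.M₁)) :=
  J.left_majorant.hasParabolicSuperjet (J.norm_left_sub_le.trans_lt hsr)

theorem DoubledJets.right_superjet (hsr : s < r) :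
    HasParabolicSuperjet T w₂ J.b.fst J.b.snd (-(m * (J.α - J.β).fst) + J.e₂.fst)
      (-(κ • (J.α - J.β).snd) + J.e₂.snd) (quadMatrix (spatialBlock J.M₂)) :=
  J.right_majorant.hasParabolicSuperjet (J.norm_right_sub_le.trans_lt hsr)

end

theorem nonempty_coupledSuperjets_of_doubledJets {z₀ : SpaceTime n} {r : ℝ}
    (J : DoubledJets (timeSlab T z₀ r) (fun z => w₁ z.fst z.snd) (fun z => w₂ z.fst z.snd)
      z₀ s m (blockScaling n m κ))
    (hs : s ≤ 1) (hsr : s < r) (hsT : z₀.fst + s < T) (hκ : 0 ≤ κ) (hκm : κ ≤ m) (hδ : 0 ≤ δ)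
    (hmδ : 9 < m * δ ^ 2) :
    Nonempty (CoupledSuperjets T w₁ w₂ z₀.fst z₀.snd s κ δ) := by
  have hm : 0 ≤ m := hκ.trans hκm
  have hfst {z : SpaceTime n} (hz : ‖z‖ ≤ s) : |z.fst| ≤ s := (WithLp.norm_fst_le _ z).trans hz
  have hsnd {z : SpaceTime n} (hz : ‖z‖ ≤ s) : ‖z.snd‖ ≤ s := (WithLp.norm_snd_le _ z).trans hz
  have hfst_sub (z : SpaceTime n) (hz : ‖z - z₀‖ ≤ s) : |z.fst - z₀.fst| ≤ s := by
    simpa only [WithLp.sub_fst] using hfst hz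
  have hsnd_sub (z : SpaceTime n) (hz : ‖z - z₀‖ ≤ s) : ‖z.snd - z₀.snd‖ ≤ s := by
    simpa only [WithLp.sub_snd] using hsnd hz
  have htime (z : SpaceTime n) (hz : z ∈ timeSlab T z₀ r) (hzs : ‖z - z₀‖ ≤ s) :
      z.fst ∈ Ico 0 T := ⟨hz.2.1, by linarith [(abs_le.1 (hfst_sub z hzs)).2]⟩
  refine ⟨{
    t₁ := J.a.fst, t₂ := J.b.fst, x₁ := J.a.snd, x₂ := J.b.snd
    c := m * (J.α - J.β).fst, c₁ := J.e₁.fst, c₂ := J.e₂.fst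
    χ := (J.α - J.β).snd, p₁ := J.e₁.snd, p₂ := J.e₂.snd
    X₁ := quadMatrix (spatialBlock J.M₁), X₂ := quadMatrix (spatialBlock J.M₂)
    left_time_mem := htime _ J.left_mem J.norm_left_sub_le
    right_time_mem := htime _ J.right_mem J.norm_right_sub_le
    left_time_near := hfst_sub _ J.norm_left_sub_le
    right_time_near := hfst_sub _ J.norm_right_sub_le
    left_space_near := hsnd_sub _ J.norm_left_sub_le
    right_space_near := hsnd_sub _ J.norm_right_sub_le
    time_sub_le := ?_
    space_penalty_le := J.space_penalty_le hκ hκm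
    slope_penalty_le := ?_
    left_time_error_le := hfst J.norm_left_error_le
    right_time_error_le := hfst J.norm_right_error_le
    left_space_error_le := hsnd J.norm_left_error_le
    right_space_error_le := hsnd J.norm_right_error_le
    left_superjet := J.left_superjet hsr
    right_superjet := J.right_superjet hsr
    trace_le := trace_mul_quadMatrix_add_le J.hessian_le }⟩
  · refine abs_le_of_sq_le_sq (le_of_not_gt fun hlt => ?_) hδ
    linarith [J.time_penalty_le hm hκ, mul_le_mul_of_nonneg_left hlt.le hm]
  · exact le_of_add_le_of_nonneg_right J.penalty_le (mul_nonneg hm (sq_nonneg _))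

/-- The time penalization is chosen after the space penalization `κ`, so the distance `δ` between
the two times may depend on `κ`. -/
theorem exists_coupledSuperjets
    (hw₁ : ContinuousOn (fun z : ℝ × Eucl n => w₁ z.1 z.2) (Icc 0 T ×ˢ univ))
    (hw₂ : ContinuousOn (fun z : ℝ × Eucl n => w₂ z.1 z.2) (Icc 0 T ×ˢ univ))
    (ht₀ : t₀ ∈ Ico 0 T)
    (hmax : IsLocalMaxOn (fun z : ℝ × Eucl n => w₁ z.1 z.2 + w₂ z.1 z.2)
      (Icc 0 T ×ˢ univ) (t₀, x₀)) (hs : 0 < s) (hs1 : s ≤ 1) :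
    ∃ κ, 1 ≤ κ ∧ ∀ δ > 0, Nonempty (CoupledSuperjets T w₁ w₂ t₀ x₀ s κ δ) := by
  obtain ⟨r, hr, hr_max⟩ :=
    exists_timeSlab_forall_le (w₁ := fun t x => w₁ t x + w₂ t x) hmax
  set z₀ := toSpaceTime n (t₀, x₀)
  obtain ⟨s', hs', hs'_lt⟩ := exists_between (lt_min hs (lt_min hr (sub_pos.2 ht₀.2)))
  obtain ⟨hs's, hs'r, hs'T⟩ : s' < s ∧ s' < r ∧ s' < T - t₀ := by simpa using hs'_lt
  obtain ⟨κ, hκ, hdoubled⟩ := exists_doubledJets (isCompact_timeSlab T z₀ r)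
    (z₀ := z₀) ⟨Metric.mem_closedBall_self hr.le, ht₀.1, ht₀.2.le⟩
    (continuousOn_timeSlab hw₁ z₀ r) (continuousOn_timeSlab hw₂ z₀ r) hr_max hs'
    (hs's.le.trans hs1)
  have hκ0 : 0 ≤ κ := zero_le_one.trans hκ
  refine ⟨κ, hκ, fun δ hδ => ?_⟩
  set m := max κ (10 / δ ^ 2)
  have hκm : κ ≤ m := le_max_left _ _
  have hmδ : 10 ≤ m * δ ^ 2 := (div_le_iff₀ (by positivity)).1 (le_max_right _ _)
  obtain ⟨J⟩ := hdoubled m (blockScaling n m κ) hκm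
    (isPositive_blockScaling (hκ0.trans hκm) hκ0) fun z => by
      rw [inner_blockScaling_self, norm_sq_eq_fst_snd, mul_add]
      gcongr
  obtain ⟨C⟩ := nonempty_coupledSuperjets_of_doubledJets J (hs's.le.trans hs1) hs'r
    (lt_sub_iff_add_lt'.1 hs'T) hκ0 hκm hδ.le (by linarith)
  exact ⟨C.mono hs's.le⟩

end Doubling

section LipschitzCoefficients

variable {Y W E : Type*} [PseudoMetricSpace Y]

/-- Regularity of a coefficient `h` with control parameter `w` as in (H4.1) and (H4.2): continuous
in `(t, w)` for each `y`, and `C`-Lipschitz in `y` uniformly in `(t, w)`. -/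
structure IsLipschitzCoefficient [TopologicalSpace W] [PseudoMetricSpace E] (T : ℝ) (C : NNReal)
    (h : ℝ → Y → W → E) : Prop where
  continuousOn : ∀ y, ContinuousOn (fun q : ℝ × W => h q.1 y q.2) (Icc 0 T ×ˢ univ)
  lipschitzWith : ∀ t ∈ Icc 0 T, ∀ w, LipschitzWith C fun y => h t y w

namespace IsLipschitzCoefficient

variable {T : ℝ} {C : NNReal} {h : ℝ → Y → W → E}

section Topological

variable [TopologicalSpace W]

theorem continuousOn_uncurry [PseudoMetricSpace E] (hh : IsLipschitzCoefficient T C h) :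
    ContinuousOn (fun q : (ℝ × Y) × W => h q.1.1 q.1.2 q.2) ((Icc 0 T ×ˢ univ) ×ˢ univ) := by
  have hprod : ContinuousOn (fun q : Y × (ℝ × W) => h q.2.1 q.1 q.2.2)
      (univ ×ˢ (Icc 0 T ×ˢ univ)) :=
    continuousOn_prod_of_continuousOn_lipschitzOnWith _ C (fun y _ => hh.continuousOn y)
      fun q hq => (hh.lipschitzWith q.1 hq.1 q.2).lipschitzOnWith
  exact hprod.comp (f := fun q : (ℝ × Y) × W => (q.1.2, (q.1.1, q.2))) (by fun_prop)
    fun q hq => ⟨mem_univ _, hq.1.1, mem_univ _⟩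

theorem continuous_comp [PseudoMetricSpace E] (hh : IsLipschitzCoefficient T C h) {t : ℝ}
    (ht : t ∈ Icc 0 T) {y : W → Y} (hy : Continuous y) : Continuous fun w => h t (y w) w :=
  hh.continuousOn_uncurry.comp_continuous (f := fun w => ((t, y w), w)) (by fun_prop)
    fun _ => ⟨⟨ht, mem_univ _⟩, mem_univ _⟩

theorem exists_norm_le [CompactSpace W] [SeminormedAddCommGroup E]
    (hh : IsLipschitzCoefficient T C h) {L : Set Y} (hL : IsCompact L) :
    ∃ S, 0 ≤ S ∧ ∀ t ∈ Icc 0 T, ∀ y ∈ L, ∀ w, ‖h t y w‖ ≤ S := by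
  obtain ⟨S, hS⟩ := ((isCompact_Icc.prod hL).prod isCompact_univ).exists_bound_of_continuousOn
    (hh.continuousOn_uncurry.mono (prod_mono (prod_mono le_rfl (subset_univ L)) le_rfl))
  exact ⟨max 0 S, le_max_left _ _, fun t ht y hy w =>
    (hS ((t, y), w) ⟨⟨ht, hy⟩, mem_univ w⟩).trans (le_max_right _ _)⟩

end Topological

theorem exists_dist_le [PseudoMetricSpace W] [CompactSpace W] [PseudoMetricSpace E]
    (hh : IsLipschitzCoefficient T C h) {L : Set Y} (hL : IsCompact L) {ε : ℝ} (hε : 0 < ε) :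
    ∃ δ > 0, ∀ t ∈ Icc 0 T, ∀ t' ∈ Icc 0 T, |t - t'| ≤ δ → ∀ y, ∀ y' ∈ L, ∀ w,
      dist (h t y w) (h t' y' w) ≤ C * dist y y' + ε := by
  have hcont := ((isCompact_Icc.prod hL).prod isCompact_univ).uniformContinuousOn_of_continuous
    (hh.continuousOn_uncurry.mono (prod_mono (prod_mono le_rfl (subset_univ L)) le_rfl))
  obtain ⟨δ, hδ, hmod⟩ := Metric.uniformContinuousOn_iff.1 hcont ε hε
  refine ⟨δ / 2, half_pos hδ, fun t ht t' ht' htt y y' hy' w => ?_⟩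
  have htime : dist (h t y' w) (h t' y' w) < ε := by
    refine hmod ((t, y'), w) ⟨⟨ht, hy'⟩, mem_univ w⟩ ((t', y'), w) ⟨⟨ht', hy'⟩, mem_univ w⟩ ?_
    simpa [Prod.dist_eq, Real.dist_eq, hδ] using htt.trans_lt (half_lt_self hδ)
  exact (dist_triangle _ (h t y' w) _).trans
    (add_le_add ((hh.lipschitzWith t ht w).dist_le_mul y y') htime.le)

end IsLipschitzCoefficient

end LipschitzCoefficients

section Generators

variable {n d : ℕ}

theorem rowMul_apply_eq_inner (p : Eucl n) (σ : Matrix (Fin n) (Fin d) ℝ) (k : Fin d) :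
    rowMul p σ k = ⟪p, column σ k⟫ := by
  simp [rowMul, column, PiLp.inner_apply, mul_comm]

theorem rowMul_add (p q : Eucl n) (σ : Matrix (Fin n) (Fin d) ℝ) :
    rowMul (p + q) σ = rowMul p σ + rowMul q σ := by
  ext k
  simp only [PiLp.add_apply, rowMul_apply_eq_inner, inner_add_left]

theorem rowMul_neg (p : Eucl n) (σ : Matrix (Fin n) (Fin d) ℝ) :
    rowMul (-p) σ = -rowMul p σ := by
  ext k
  simp only [PiLp.neg_apply, rowMul_apply_eq_inner, inner_neg_left]

theorem rowMul_sub (p : Eucl n) (σ σ' : Matrix (Fin n) (Fin d) ℝ) :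
    rowMul p (σ - σ') = rowMul p σ - rowMul p σ' := by
  ext k
  simp only [PiLp.sub_apply, rowMul_apply_eq_inner, column_sub, inner_sub_right]

theorem norm_rowMul_le (p : Eucl n) (σ : Matrix (Fin n) (Fin d) ℝ) :
    ‖rowMul p σ‖ ≤ ‖p‖ * ‖σ‖ := by
  refine le_of_sq_le_sq ?_ (by positivity)
  rw [mul_pow, norm_sq_eq_sum_column, EuclideanSpace.norm_sq_eq, Finset.mul_sum]
  refine Finset.sum_le_sum fun k _ => ?_
  rw [rowMul_apply_eq_inner, ← mul_pow]
  exact pow_le_pow_left₀ (norm_nonneg _) (norm_inner_le_norm _ _) 2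

theorem continuous_rowMul :
    Continuous fun q : Eucl n × Matrix (Fin n) (Fin d) ℝ => rowMul q.1 q.2 := by
  unfold rowMul
  exact (PiLp.continuous_toLp 2 _).comp (by fun_prop)

/-- The value at `(p, X)` of the linear differential operator `½ tr(σσᵀ D²) + b · D`. -/
def generator (b : Eucl n) (σ : Matrix (Fin n) (Fin d) ℝ) (p : Eucl n)
    (X : Matrix (Fin n) (Fin n) ℝ) : ℝ :=
  1 / 2 * Matrix.trace (σ * σᵀ * X) + ⟪p, b⟫

theorem generator_add (b : Eucl n) (σ : Matrix (Fin n) (Fin d) ℝ) (p q : Eucl n)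
    (X Y : Matrix (Fin n) (Fin n) ℝ) :
    generator b σ (p + q) (X + Y) = generator b σ p X + generator b σ q Y := by
  simp only [generator, mul_add, Matrix.trace_add, inner_add_left]
  ring

theorem generator_neg (b : Eucl n) (σ : Matrix (Fin n) (Fin d) ℝ) (p : Eucl n)
    (X : Matrix (Fin n) (Fin n) ℝ) : generator b σ (-p) (-X) = -generator b σ p X := by
  simp only [generator, mul_neg, Matrix.trace_neg, inner_neg_left]
  ring

theorem continuous_generator :
    Continuous fun q : (Eucl n × Matrix (Fin n) (Fin d) ℝ) × Eucl n × Matrix (Fin n) (Fin n) ℝ =>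
      generator q.1.1 q.1.2 q.2.1 q.2.2 := by
  unfold generator
  fun_prop

end Generators

section PenalizationEstimates

variable {n d : ℕ} {T t₀ s κ δ C S ℓ : ℝ} {x₀ : Eucl n} {w₁ w₂ : ℝ → Eucl n → ℝ}
  {b₁ b₂ : Eucl n} {σ₁ σ₂ : Matrix (Fin n) (Fin d) ℝ}

namespace CoupledSuperjets

variable (J : CoupledSuperjets T w₁ w₂ t₀ x₀ s κ δ)
include J

theorem norm_slope_le_one (hκ : 1 ≤ κ) (hs1 : s ≤ 1) : ‖J.χ‖ ≤ 1 :=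
  (sq_le_one_iff₀ (norm_nonneg _)).1
    ((le_mul_of_one_le_left (sq_nonneg _) hκ).trans (J.slope_penalty_le.trans hs1))

theorem penalty_mul_le (hκ : 1 ≤ κ) (hs : 0 ≤ s) (hs1 : s ≤ 1) (hC : 0 ≤ C)
    (hℓ : ℓ ≤ C * ‖J.x₁ - J.x₂‖ + s / κ) : κ * ‖J.χ‖ * ℓ ≤ (5 * C + 1) * s := by
  have hκ0 : 0 < κ := by linarith
  have hcross : κ * ‖J.χ‖ * ‖J.x₁ - J.x₂‖ ≤ 5 * s := by
    linarith [mul_nonneg hκ0.le (sq_nonneg (‖J.χ‖ - ‖J.x₁ - J.x₂‖)), J.space_penalty_le,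
      J.slope_penalty_le]
  calc κ * ‖J.χ‖ * ℓ ≤ κ * ‖J.χ‖ * (C * ‖J.x₁ - J.x₂‖ + s / κ) := by gcongr
    _ = C * (κ * ‖J.χ‖ * ‖J.x₁ - J.x₂‖) + ‖J.χ‖ * s := by field_simp
    _ ≤ C * (5 * s) + 1 * s := by
      gcongr
      exact J.norm_slope_le_one hκ hs1
    _ = (5 * C + 1) * s := by ring

theorem penalty_mul_sq_le (hκ : 1 ≤ κ) (hs : 0 ≤ s) (hs1 : s ≤ 1) (hℓ0 : 0 ≤ ℓ)
    (hℓ : ℓ ≤ C * ‖J.x₁ - J.x₂‖ + s / κ) : κ * ℓ ^ 2 ≤ (18 * C ^ 2 + 2) * s := by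
  have hκ0 : 0 < κ := by linarith
  have hratio : s / κ ≤ 1 := (div_le_one hκ0).2 (hs1.trans hκ)
  calc κ * ℓ ^ 2 ≤ κ * (C * ‖J.x₁ - J.x₂‖ + s / κ) ^ 2 := by gcongr
    _ ≤ κ * (2 * ((C * ‖J.x₁ - J.x₂‖) ^ 2 + (s / κ) ^ 2)) := by
      gcongr
      exact add_sq_le
    _ = 2 * C ^ 2 * (κ * ‖J.x₁ - J.x₂‖ ^ 2) + 2 * s * (s / κ) := by field_simp
    _ ≤ 2 * C ^ 2 * (9 * s) + 2 * s * 1 :=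
      add_le_add (mul_le_mul_of_nonneg_left J.space_penalty_le (by positivity))
        (mul_le_mul_of_nonneg_left hratio (by positivity))
    _ = (18 * C ^ 2 + 2) * s := by ring

theorem generator_add_generator_le (hκ : 1 ≤ κ) (hs : 0 ≤ s) (hs1 : s ≤ 1) (hC : 0 ≤ C)
    (hb₁ : ‖b₁‖ ≤ S) (hb₂ : ‖b₂‖ ≤ S) (hσ₁ : ‖σ₁‖ ≤ S) (hσ₂ : ‖σ₂‖ ≤ S)
    (hb : ‖b₁ - b₂‖ ≤ C * ‖J.x₁ - J.x₂‖ + s / κ) (hσ : ‖σ₁ - σ₂‖ ≤ C * ‖J.x₁ - J.x₂‖ + s / κ) :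
    generator b₁ σ₁ (κ • J.χ + J.p₁) J.X₁ + generator b₂ σ₂ (-(κ • J.χ) + J.p₂) J.X₂ ≤
      (9 * C ^ 2 + 2 + S ^ 2 + 5 * C + 2 * S) * s := by
  have hdiffusion : κ * ‖σ₁ - σ₂‖ ^ 2 ≤ (18 * C ^ 2 + 2) * s :=
    J.penalty_mul_sq_le hκ hs hs1 (norm_nonneg _) hσ
  have herror : s * (‖σ₁‖ ^ 2 + ‖σ₂‖ ^ 2) ≤ s * (S ^ 2 + S ^ 2) := by gcongr
  have hdrift : ⟪κ • J.χ, b₁ - b₂⟫ ≤ (5 * C + 1) * s := by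
    refine (real_inner_le_norm _ _).trans ?_
    rw [norm_smul, Real.norm_of_nonneg (by linarith)]
    exact J.penalty_mul_le hκ hs hs1 hC hb
  have hleft : ⟪J.p₁, b₁⟫ ≤ s * S := (real_inner_le_norm _ _).trans
    (mul_le_mul J.left_space_error_le hb₁ (norm_nonneg _) hs)
  have hright : ⟪J.p₂, b₂⟫ ≤ s * S := (real_inner_le_norm _ _).trans
    (mul_le_mul J.right_space_error_le hb₂ (norm_nonneg _) hs)
  rw [inner_sub_right] at hdrift
  simp only [generator, inner_add_left, inner_neg_left]
  linarith [J.trace_le σ₁ σ₂]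

theorem norm_rowMul_add_rowMul_le (hκ : 1 ≤ κ) (hs : 0 ≤ s) (hs1 : s ≤ 1) (hC : 0 ≤ C)
    (hσ₁ : ‖σ₁‖ ≤ S) (hσ₂ : ‖σ₂‖ ≤ S) (hσ : ‖σ₁ - σ₂‖ ≤ C * ‖J.x₁ - J.x₂‖ + s / κ) :
    ‖rowMul (κ • J.χ + J.p₁) σ₁ + rowMul (-(κ • J.χ) + J.p₂) σ₂‖ ≤ (5 * C + 1 + 2 * S) * s := by
  have hsplit : rowMul (κ • J.χ + J.p₁) σ₁ + rowMul (-(κ • J.χ) + J.p₂) σ₂ =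
      rowMul (κ • J.χ) (σ₁ - σ₂) + rowMul J.p₁ σ₁ + rowMul J.p₂ σ₂ := by
    simp only [rowMul_add, rowMul_sub, rowMul_neg]
    abel
  have hslope : ‖rowMul (κ • J.χ) (σ₁ - σ₂)‖ ≤ (5 * C + 1) * s := by
    refine (norm_rowMul_le _ _).trans ?_
    rw [norm_smul, Real.norm_of_nonneg (by linarith)]
    exact J.penalty_mul_le hκ hs hs1 hC hσ
  have hleft : ‖rowMul J.p₁ σ₁‖ ≤ s * S := (norm_rowMul_le _ _).trans
    (mul_le_mul J.left_space_error_le hσ₁ (norm_nonneg _) hs)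
  have hright : ‖rowMul J.p₂ σ₂‖ ≤ s * S := (norm_rowMul_le _ _).trans
    (mul_le_mul J.right_space_error_le hσ₂ (norm_nonneg _) hs)
  rw [hsplit]
  exact norm_add₃_le.trans (by linarith)

theorem norm_rowMul_slope_le (hκ : 1 ≤ κ) (hs1 : s ≤ 1) (hσ₂ : ‖σ₂‖ ≤ S) :
    ‖rowMul (-(-(κ • J.χ) + J.p₂)) σ₂‖ ≤ (κ + 1) * S := by
  have hnorm : ‖-(κ • J.χ) + J.p₂‖ ≤ κ * 1 + 1 := by
    refine norm_add_le_of_le ?_ (J.right_space_error_le.trans hs1)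
    rw [norm_neg, norm_smul, Real.norm_of_nonneg (by linarith)]
    gcongr
    exact J.norm_slope_le_one hκ hs1
  refine (norm_rowMul_le _ _).trans ?_
  rw [norm_neg]
  exact mul_le_mul (hnorm.trans_eq (by rw [mul_one])) hσ₂ (norm_nonneg _) (by linarith)

theorem norm_space_sub_le : ‖J.x₁ - J.x₂‖ ≤ 2 * s := by
  rw [← sub_sub_sub_cancel_right J.x₁ J.x₂ x₀, two_mul]
  exact norm_sub_le_of_le J.left_space_near J.right_space_near

end CoupledSuperjets

end PenalizationEstimates

section Hamiltonians

variable {n d : ℕ} {W : Type*}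

/-- The expression whose `sup inf` over the control `w = (u, v)` is the Isaacs Hamiltonian; the
running cost `g` takes the pair `(x, z)`, its dependence on the value `y` being frozen. -/
def isaacsIntegrand (b : ℝ → Eucl n → W → Eucl n) (σ : ℝ → Eucl n → W → Matrix (Fin n) (Fin d) ℝ)
    (g : ℝ → Eucl n × Eucl d → W → ℝ) (t : ℝ) (x p : Eucl n) (X : Matrix (Fin n) (Fin n) ℝ)
    (w : W) : ℝ :=
  generator (b t x w) (σ t x w) p X + g t (x, rowMul p (σ t x w)) w

/-- The expression whose supremum over the controls is the Hamiltonian of the equation satisfied by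
the difference, without its zeroth order term. -/
def extremalIntegrand (K : ℝ) (b : ℝ → Eucl n → W → Eucl n)
    (σ : ℝ → Eucl n → W → Matrix (Fin n) (Fin d) ℝ) (t : ℝ) (x p : Eucl n)
    (X : Matrix (Fin n) (Fin n) ℝ) (w : W) : ℝ :=
  generator (b t x w) (σ t x w) p X + K * ‖rowMul p (σ t x w)‖

variable {K T t₀ s κ δ S B : ℝ} {C Cg : NNReal} {x₀ : Eucl n} {w₁ w₂ : ℝ → Eucl n → ℝ}
  {b : ℝ → Eucl n → W → Eucl n} {σ : ℝ → Eucl n → W → Matrix (Fin n) (Fin d) ℝ}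
  {g : ℝ → Eucl n × Eucl d → W → ℝ}

theorem CoupledSuperjets.isaacsIntegrand_le (J : CoupledSuperjets T w₁ w₂ t₀ x₀ s κ δ)
    (hκ : 1 ≤ κ) (hs : 0 ≤ s) (hs1 : s ≤ 1) (hK : 0 ≤ K) {w : W}
    (hb₁ : ‖b J.t₁ J.x₁ w‖ ≤ S) (hb₂ : ‖b J.t₂ J.x₂ w‖ ≤ S)
    (hσ₁ : ‖σ J.t₁ J.x₁ w‖ ≤ S) (hσ₂ : ‖σ J.t₂ J.x₂ w‖ ≤ S)
    (hb : ‖b J.t₁ J.x₁ w - b J.t₂ J.x₂ w‖ ≤ C * ‖J.x₁ - J.x₂‖ + s / κ)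
    (hσ : ‖σ J.t₁ J.x₁ w - σ J.t₂ J.x₂ w‖ ≤ C * ‖J.x₁ - J.x₂‖ + s / κ)
    (hgK : ∀ z z', |g J.t₁ (J.x₁, z) w - g J.t₁ (J.x₁, z') w| ≤ K * ‖z - z'‖)
    (hg : ∀ z, ‖z‖ ≤ (κ + 1) * S → |g J.t₁ (J.x₁, z) w - g J.t₂ (J.x₂, z) w| ≤ B * s)
    (p : Eucl n) (X : Matrix (Fin n) (Fin n) ℝ) :
    isaacsIntegrand b σ g J.t₁ J.x₁ (p + (κ • J.χ + J.p₁)) (X + J.X₁) w ≤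
      isaacsIntegrand b σ g J.t₂ J.x₂ (-(-(κ • J.χ) + J.p₂)) (-J.X₂) w +
        (extremalIntegrand K b σ J.t₁ J.x₁ p X w +
          (9 * C ^ 2 + 2 + S ^ 2 + 5 * C + 2 * S + K * (5 * C + 1 + 2 * S) + B) * s) := by
  have hC : (0 : ℝ) ≤ C := C.coe_nonneg
  have hgenerator := J.generator_add_generator_le hκ hs hs1 hC hb₁ hb₂ hσ₁ hσ₂ hb hσ
  have hslope := J.norm_rowMul_add_rowMul_le hκ hs hs1 hC hσ₁ hσ₂ hσ
  have hpoint := abs_le.1 (hg _ (J.norm_rowMul_slope_le hκ hs1 hσ₂))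
  have hcost := abs_le.1 (hgK (rowMul (p + (κ • J.χ + J.p₁)) (σ J.t₁ J.x₁ w))
    (rowMul (-(-(κ • J.χ) + J.p₂)) (σ J.t₂ J.x₂ w)))
  have hmartingale : K * ‖rowMul (p + (κ • J.χ + J.p₁)) (σ J.t₁ J.x₁ w) -
      rowMul (-(-(κ • J.χ) + J.p₂)) (σ J.t₂ J.x₂ w)‖ ≤
        K * (‖rowMul p (σ J.t₁ J.x₁ w)‖ + (5 * C + 1 + 2 * S) * s) := by
    rw [rowMul_add, rowMul_neg (-(κ • J.χ) + J.p₂), sub_neg_eq_add, add_assoc]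
    exact mul_le_mul_of_nonneg_left (norm_add_le_of_le le_rfl hslope) hK
  simp only [isaacsIntegrand, extremalIntegrand, generator_add, generator_neg]
  linarith [hpoint.2, hcost.2]

theorem exists_isaacsIntegrand_le [PseudoMetricSpace W] [CompactSpace W] (hK : 0 ≤ K)
    (hb : IsLipschitzCoefficient T C b) (hσ : IsLipschitzCoefficient T C σ)
    (hg : IsLipschitzCoefficient T Cg g)
    (hgK : ∀ t ∈ Icc 0 T, ∀ x z z' w, |g t (x, z) w - g t (x, z') w| ≤ K * ‖z - z'‖)
    (x₀ : Eucl n) :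
    ∃ A, ∀ s, 0 < s → s ≤ 1 → ∀ κ, 1 ≤ κ → ∃ δ > 0,
      ∀ (t₀ : ℝ) (w₁ w₂ : ℝ → Eucl n → ℝ) (J : CoupledSuperjets T w₁ w₂ t₀ x₀ s κ δ) p X w,
      isaacsIntegrand b σ g J.t₁ J.x₁ (p + (κ • J.χ + J.p₁)) (X + J.X₁) w ≤
        isaacsIntegrand b σ g J.t₂ J.x₂ (-(-(κ • J.χ) + J.p₂)) (-J.X₂) w +
          (extremalIntegrand K b σ J.t₁ J.x₁ p X w + A * s) := by
  have hL := isCompact_closedBall x₀ 1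
  obtain ⟨Sb, hSb0, hSb⟩ := hb.exists_norm_le hL
  obtain ⟨Sσ, hSσ0, hSσ⟩ := hσ.exists_norm_le hL
  refine ⟨9 * C ^ 2 + 2 + (Sb + Sσ) ^ 2 + 5 * C + 2 * (Sb + Sσ) +
    K * (5 * C + 1 + 2 * (Sb + Sσ)) + (2 * Cg + 1), fun s hs hs1 κ hκ => ?_⟩
  have hsκ : 0 < s / κ := div_pos hs (by linarith)
  obtain ⟨δb, hδb, hmodb⟩ := hb.exists_dist_le hL hsκ
  obtain ⟨δσ, hδσ, hmodσ⟩ := hσ.exists_dist_le hL hsκ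
  obtain ⟨δg, hδg, hmodg⟩ :=
    hg.exists_dist_le (hL.prod (isCompact_closedBall (0 : Eucl d) ((κ + 1) * (Sb + Sσ)))) hs
  refine ⟨min δb (min δσ δg), lt_min hδb (lt_min hδσ hδg), fun t₀ w₁ w₂ J p X w => ?_⟩
  have ht₁ := Ico_subset_Icc_self J.left_time_mem
  have ht₂ := Ico_subset_Icc_self J.right_time_mem
  have hx₁ : J.x₁ ∈ Metric.closedBall x₀ 1 :=
    mem_closedBall_iff_norm.2 (J.left_space_near.trans hs1)
  have hx₂ : J.x₂ ∈ Metric.closedBall x₀ 1 :=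
    mem_closedBall_iff_norm.2 (J.right_space_near.trans hs1)
  obtain ⟨htb, htσ, htg⟩ : |J.t₁ - J.t₂| ≤ δb ∧ |J.t₁ - J.t₂| ≤ δσ ∧ |J.t₁ - J.t₂| ≤ δg := by
    simpa only [le_min_iff] using J.time_sub_le
  refine J.isaacsIntegrand_le hκ hs.le hs1 hK
    ((hSb _ ht₁ _ hx₁ w).trans (le_add_of_nonneg_right hSσ0))
    ((hSb _ ht₂ _ hx₂ w).trans (le_add_of_nonneg_right hSσ0))
    ((hSσ _ ht₁ _ hx₁ w).trans (le_add_of_nonneg_left hSb0))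
    ((hSσ _ ht₂ _ hx₂ w).trans (le_add_of_nonneg_left hSb0)) ?_ ?_ (hgK _ ht₁ _ · · w) ?_ p X
  · simpa only [dist_eq_norm] using hmodb _ ht₁ _ ht₂ htb J.x₁ _ hx₂ w
  · simpa only [dist_eq_norm] using hmodσ _ ht₁ _ ht₂ htσ J.x₁ _ hx₂ w
  · intro z hz
    have hcost := hmodg _ ht₁ _ ht₂ htg (J.x₁, z) (J.x₂, z) ⟨hx₂, mem_closedBall_zero_iff.2 hz⟩ w
    rw [dist_prod_same_right, Real.dist_eq, dist_eq_norm] at hcost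
    linarith [mul_le_mul_of_nonneg_left J.norm_space_sub_le Cg.coe_nonneg]

section Continuity

variable [TopologicalSpace W]

theorem continuous_isaacsIntegrand (hb : IsLipschitzCoefficient T C b)
    (hσ : IsLipschitzCoefficient T C σ) (hg : IsLipschitzCoefficient T Cg g) {t : ℝ}
    (ht : t ∈ Icc 0 T) (x p : Eucl n) (X : Matrix (Fin n) (Fin n) ℝ) :
    Continuous (isaacsIntegrand b σ g t x p X) := by
  have hbx := hb.continuous_comp ht (continuous_const (y := x))
  have hσx := hσ.continuous_comp ht (continuous_const (y := x))
  have hgenerator : Continuous fun w => generator (b t x w) (σ t x w) p X :=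
    continuous_generator.comp (f := fun w => ((b t x w, σ t x w), p, X))
      ((hbx.prodMk hσx).prodMk continuous_const)
  have hz : Continuous fun w => rowMul p (σ t x w) :=
    continuous_rowMul.comp (continuous_const.prodMk hσx)
  exact hgenerator.add (hg.continuous_comp ht (continuous_const.prodMk hz))

theorem continuousOn_extremalIntegrand (hb : IsLipschitzCoefficient T C b)
    (hσ : IsLipschitzCoefficient T C σ) {p : ℝ × Eucl n → Eucl n}
    {X : ℝ × Eucl n → Matrix (Fin n) (Fin n) ℝ} (hp : Continuous p) (hX : Continuous X) :
    ContinuousOn (fun q : (ℝ × Eucl n) × W =>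
      extremalIntegrand K b σ q.1.1 q.1.2 (p q.1) (X q.1) q.2) ((Icc 0 T ×ˢ univ) ×ˢ univ) := by
  have hp' : ContinuousOn (fun q : (ℝ × Eucl n) × W => p q.1) ((Icc 0 T ×ˢ univ) ×ˢ univ) :=
    (hp.comp continuous_fst).continuousOn
  have hX' : ContinuousOn (fun q : (ℝ × Eucl n) × W => X q.1) ((Icc 0 T ×ˢ univ) ×ˢ univ) :=
    (hX.comp continuous_fst).continuousOn
  exact (continuous_generator.comp_continuousOn
    ((hb.continuousOn_uncurry.prodMk hσ.continuousOn_uncurry).prodMk (hp'.prodMk hX'))).add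
    (continuousOn_const.mul
      (continuous_rowMul.comp_continuousOn (hp'.prodMk hσ.continuousOn_uncurry)).norm)

end Continuity

end Hamiltonians

section Suprema

theorem continuousOn_iSup_of_compactSpace {Z W : Type*} [TopologicalSpace Z] [TopologicalSpace W]
    [CompactSpace W] {D : Set Z} {F : Z × W → ℝ} (hF : ContinuousOn F (D ×ˢ univ)) :
    ContinuousOn (fun z => ⨆ w, F (z, w)) D := by
  rw [continuousOn_iff_continuous_domRestrict]
  have hF' : Continuous fun q : D × W => F (q.1, q.2) :=
    hF.comp_continuous (by fun_prop) fun q => ⟨q.1.2, mem_univ _⟩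
  simpa only [sSup_image', image_univ, iSup, domRestrict_def] using
    isCompact_univ.continuous_sSup (f := fun (z : D) w => F (z, w)) hF'

theorem iSup_iInf_le_add {U V : Type*} [TopologicalSpace U] [CompactSpace U] [Nonempty U]
    [TopologicalSpace V] [CompactSpace V] [Nonempty V] {F₁ F₂ : U × V → ℝ} {D : ℝ}
    (h₁ : Continuous F₁) (h₂ : Continuous F₂) (h : ∀ w, F₁ w ≤ F₂ w + D) :
    ⨆ u, ⨅ v, F₁ (u, v) ≤ (⨆ u, ⨅ v, F₂ (u, v)) + D := by
  have hbelow {F : U × V → ℝ} (hF : Continuous F) (u : U) : BddBelow (range fun v => F (u, v)) :=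
    (isCompact_range (hF.comp (.prodMk_right u))).bddBelow
  obtain ⟨M, hM⟩ := (isCompact_range h₂).bddAbove
  obtain ⟨v₀⟩ := ‹Nonempty V›
  have habove : BddAbove (range fun u => ⨅ v, F₂ (u, v)) :=
    ⟨M, forall_mem_range.2 fun u => (ciInf_le (hbelow h₂ u) v₀).trans (hM (mem_range_self _))⟩
  refine ciSup_le fun u => ?_
  calc ⨅ v, F₁ (u, v) ≤ (⨅ v, F₂ (u, v)) + D :=
        sub_le_iff_le_add.1 (le_ciInf fun v => sub_le_iff_le_add.2
          ((ciInf_le (hbelow h₁ u) v).trans (h (u, v))))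
    _ ≤ (⨆ u, ⨅ v, F₂ (u, v)) + D := add_le_add_left (le_ciSup habove u) D

theorem le_iSup_iSup_of_continuous {U V : Type*} [TopologicalSpace U] [CompactSpace U]
    [TopologicalSpace V] [CompactSpace V] {F : U × V → ℝ} (hF : Continuous F) (w : U × V) :
    F w ≤ ⨆ u, ⨆ v, F (u, v) := by
  have hV (u : U) : BddAbove (range fun v => F (u, v)) :=
    (isCompact_range (hF.comp (.prodMk_right u))).bddAbove
  have : Nonempty V := ⟨w.2⟩
  obtain ⟨M, hM⟩ := (isCompact_range hF).bddAbove
  have hU : BddAbove (range fun u => ⨆ v, F (u, v)) :=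
    ⟨M, forall_mem_range.2 fun u => ciSup_le fun v => hM (mem_range_self _)⟩
  exact (le_ciSup (hV w.1) w.2).trans (le_ciSup hU w.1)

theorem nonneg_of_forall_exists_dist_le {Z : Type*} [PseudoMetricSpace Z] {F : Z → ℝ} {D : Set Z}
    {z₀ : Z} {A : ℝ} (hF : ContinuousWithinAt F D z₀)
    (h : ∀ s, 0 < s → s ≤ 1 → ∃ z ∈ D, dist z z₀ ≤ s ∧ 0 ≤ F z + A * s) : 0 ≤ F z₀ := by
  have : Nonempty Z := ⟨z₀⟩
  choose! z hzD hz hFz using h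
  have hsmall : ∀ᶠ s : ℝ in 𝓝[>] 0, 0 < s ∧ s ≤ 1 :=
    (eventually_mem_nhdsWithin (s := Ioi (0 : ℝ))).and
      (nhdsWithin_le_nhds (eventually_le_nhds one_pos))
  have hid : Tendsto (fun s : ℝ => s) (𝓝[>] 0) (𝓝 0) := tendsto_id'.2 nhdsWithin_le_nhds
  have hlim : Tendsto z (𝓝[>] 0) (𝓝[D] z₀) :=
    tendsto_nhdsWithin_iff.2 ⟨tendsto_iff_dist_tendsto_zero.2
      (squeeze_zero' (.of_forall fun _ => dist_nonneg)
        (hsmall.mono fun s hs => hz s hs.1 hs.2) hid),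
      hsmall.mono fun s hs => hzD s hs.1 hs.2⟩
  have hvalue := (hF.tendsto.comp hlim).add (hid.const_mul A)
  rw [mul_zero, add_zero] at hvalue
  exact ge_of_tendsto hvalue (hsmall.mono fun s hs => hFz s hs.1 hs.2)

end Suprema

section Comparison

variable {n d : ℕ} {U V : Type*}

/-- A coefficient depending on two controls, as a coefficient depending on the pair of them. -/
def pairControls {Y E : Type*} (h : ℝ → Y → U → V → E) : ℝ → Y → U × V → E :=
  fun t y w => h t y w.1 w.2

/-- The running cost at the value `y = 0`, as a coefficient depending on the pairs `(x, z)` and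
`(u, v)`. -/
def costAtZero (f : ℝ → Eucl n → ℝ → Eucl d → U → V → ℝ) : ℝ → Eucl n × Eucl d → U × V → ℝ :=
  pairControls fun t y => f t y.1 0 y.2

theorem isLipschitzCoefficient_pairControls [TopologicalSpace U] [TopologicalSpace V]
    {Y E : Type*} [PseudoMetricSpace Y] [PseudoMetricSpace E] {T : ℝ} {C : NNReal}
    {h : ℝ → Y → U → V → E}
    (hcont : ∀ y, ContinuousOn (fun q : ℝ × U × V => h q.1 y q.2.1 q.2.2) (Icc 0 T ×ˢ univ))
    (hlip : ∀ t ∈ Icc 0 T, ∀ y y' u v, dist (h t y u v) (h t y' u v) ≤ C * dist y y') :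
    IsLipschitzCoefficient T C (pairControls h) :=
  ⟨hcont, fun t ht w => .of_dist_le_mul fun y y' => hlip t ht y y' w.1 w.2⟩

variable {K T t₀ s κ δ A : ℝ} {C Cg : NNReal} {x₀ : Eucl n}
  {b : ℝ → Eucl n → U → V → Eucl n} {σ : ℝ → Eucl n → U → V → Matrix (Fin n) (Fin d) ℝ}
  {f : ℝ → Eucl n → ℝ → Eucl d → U → V → ℝ} {g₁ g₂ : Eucl n → ℝ}
  {u₁ u₂ φ : ℝ → Eucl n → ℝ}

theorem isLipschitzCoefficient_costAtZero [TopologicalSpace U] [TopologicalSpace V]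
    {L K : NNReal}
    (hcont : ∀ x y z, ContinuousOn (fun q : ℝ × U × V => f q.1 x y z q.2.1 q.2.2)
      (Icc 0 T ×ˢ univ))
    (hL : ∀ t ∈ Icc 0 T, ∀ x x' y z u v, |f t x y z u v - f t x' y z u v| ≤ L * ‖x - x'‖)
    (hK : ∀ t ∈ Icc 0 T, ∀ x z z' u v, |f t x 0 z u v - f t x 0 z' u v| ≤ K * ‖z - z'‖) :
    IsLipschitzCoefficient T (L + K) (costAtZero f) := by
  refine isLipschitzCoefficient_pairControls (fun y => hcont y.1 0 y.2) fun t ht y y' u v => ?_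
  have hx := (hL t ht y.1 y'.1 0 y.2 u v).trans
    (mul_le_mul_of_nonneg_left (norm_fst_le (y - y')) L.coe_nonneg)
  have hz := (hK t ht y'.1 y.2 y'.2 u v).trans
    (mul_le_mul_of_nonneg_left (norm_snd_le (y - y')) K.coe_nonneg)
  rw [dist_eq_norm y, NNReal.coe_add, add_mul]
  exact (dist_triangle _ (f t y'.1 0 y.2 u v) _).trans (add_le_add hx hz)

theorem lowerHamiltonian_zero (t : ℝ) (x p : Eucl n) (X : Matrix (Fin n) (Fin n) ℝ) :
    lowerHamiltonian b σ f t x 0 p X = ⨆ u, ⨅ v,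
      isaacsIntegrand (pairControls b) (pairControls σ) (costAtZero f) t x p X (u, v) :=
  rfl

variable (K b σ φ) in
/-- The left-hand side, without the term `K|φ|`, of the viscosity inequality for the difference. -/
def extremalOperator (q : ℝ × Eucl n) : ℝ :=
  timeDeriv φ q.1 q.2 + ⨆ w, extremalIntegrand K (pairControls b) (pairControls σ) q.1 q.2
    (spaceGrad φ q.1 q.2) (spaceHess φ q.1 q.2) w

theorem continuous_extremalIntegrand [TopologicalSpace U] [TopologicalSpace V]
    (hb : IsLipschitzCoefficient T C (pairControls b))
    (hσ : IsLipschitzCoefficient T C (pairControls σ)) {t : ℝ} (ht : t ∈ Icc 0 T)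
    (x p : Eucl n) (X : Matrix (Fin n) (Fin n) ℝ) :
    Continuous (extremalIntegrand K (pairControls b) (pairControls σ) t x p X) :=
  (continuousOn_extremalIntegrand hb hσ (continuous_const (y := p))
    (continuous_const (y := X))).comp_continuous (f := fun w => ((t, x), w)) (by fun_prop)
      fun _ => ⟨⟨ht, mem_univ _⟩, mem_univ _⟩

variable [PseudoMetricSpace U] [CompactSpace U] [PseudoMetricSpace V] [CompactSpace V]

theorem continuousOn_extremalOperator (hb : IsLipschitzCoefficient T C (pairControls b))
    (hσ : IsLipschitzCoefficient T C (pairControls σ))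
    (hφ : ContDiff ℝ 3 fun z : ℝ × Eucl n => φ z.1 z.2) :
    ContinuousOn (extremalOperator K b σ φ) (Icc 0 T ×ˢ univ) :=
  (continuous_timeDeriv hφ).continuousOn.add (continuousOn_iSup_of_compactSpace
    (continuousOn_extremalIntegrand hb hσ (continuous_spaceGrad hφ) (continuous_spaceHess hφ)))

variable [Nonempty U] [Nonempty V]

theorem lowerHamiltonian_zero_le_add (hb : IsLipschitzCoefficient T C (pairControls b))
    (hσ : IsLipschitzCoefficient T C (pairControls σ))
    (hg : IsLipschitzCoefficient T Cg (costAtZero f)) {t₁ t₂ : ℝ} (ht₁ : t₁ ∈ Icc 0 T)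
    (ht₂ : t₂ ∈ Icc 0 T) {x₁ x₂ q₁ q₂ : Eucl n} {Y₁ Y₂ : Matrix (Fin n) (Fin n) ℝ} {B : ℝ}
    (h : ∀ w, isaacsIntegrand (pairControls b) (pairControls σ) (costAtZero f) t₁ x₁ q₁ Y₁ w ≤
      isaacsIntegrand (pairControls b) (pairControls σ) (costAtZero f) t₂ x₂ q₂ Y₂ w + B) :
    lowerHamiltonian b σ f t₁ x₁ 0 q₁ Y₁ ≤ lowerHamiltonian b σ f t₂ x₂ 0 q₂ Y₂ + B := by
  simp only [lowerHamiltonian_zero]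
  exact iSup_iInf_le_add (continuous_isaacsIntegrand hb hσ hg ht₁ _ _ _)
    (continuous_isaacsIntegrand hb hσ hg ht₂ _ _ _) h

theorem iSup_extremalIntegrand_le_iSup_iSup (hK : 0 ≤ K)
    (hb : IsLipschitzCoefficient T C (pairControls b))
    (hσ : IsLipschitzCoefficient T C (pairControls σ)) {t : ℝ} (ht : t ∈ Icc 0 T)
    (x p : Eucl n) (X : Matrix (Fin n) (Fin n) ℝ) (y : ℝ) :
    ⨆ w, extremalIntegrand K (pairControls b) (pairControls σ) t x p X w ≤
      ⨆ u, ⨆ v, (1 / 2) * Matrix.trace (σ t x u v * (σ t x u v)ᵀ * X) + ⟪p, b t x u v⟫ +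
        K * |y| + K * ‖rowMul p (σ t x u v)‖ := by
  have hcont := (continuous_extremalIntegrand (K := K) hb hσ ht x p X).add_const (K * |y|)
  refine (ciSup_le fun w => (le_add_of_nonneg_right (by positivity)).trans
    (le_iSup_iSup_of_continuous hcont w)).trans_eq ?_
  exact iSup_congr fun u => iSup_congr fun v => add_right_comm _ _ _

theorem CoupledSuperjets.extremalOperator_add_nonneg
    (J : CoupledSuperjets T (fun t x => u₁ t x - φ t x) (fun t x => -u₂ t x) t₀ x₀ s κ δ)
    (hφ : ContDiff ℝ 3 fun z : ℝ × Eucl n => φ z.1 z.2)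
    (hb : IsLipschitzCoefficient T C (pairControls b))
    (hσ : IsLipschitzCoefficient T C (pairControls σ))
    (hg : IsLipschitzCoefficient T Cg (costAtZero f))
    (hsub : IsViscositySubsolution T (lowerHamiltonian b σ f) g₁ u₁)
    (hsuper : IsViscositySupersolution T (lowerHamiltonian b σ f) g₂ u₂)
    (hcompare : ∀ p X w,
      isaacsIntegrand (pairControls b) (pairControls σ) (costAtZero f) J.t₁ J.x₁
          (p + (κ • J.χ + J.p₁)) (X + J.X₁) w ≤
        isaacsIntegrand (pairControls b) (pairControls σ) (costAtZero f) J.t₂ J.x₂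
            (-(-(κ • J.χ) + J.p₂)) (-J.X₂) w +
          (extremalIntegrand K (pairControls b) (pairControls σ) J.t₁ J.x₁ p X w + A * s)) :
    0 ≤ extremalOperator K b σ φ (J.t₁, J.x₁) + (A + 2) * s := by
  have ht₁ := Ico_subset_Icc_self J.left_time_mem
  have ht₂ := Ico_subset_Icc_self J.right_time_mem
  have hleft := (J.left_superjet.add_of_sub hφ).nonneg_of_isViscositySubsolution hsub
    J.left_time_mem
  have hright := J.right_superjet.nonpos_of_isViscositySupersolution hsuper J.right_time_mem
  have hbdd := (isCompact_range (continuous_extremalIntegrand (K := K) hb hσ ht₁ J.x₁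
    (spaceGrad φ J.t₁ J.x₁) (spaceHess φ J.t₁ J.x₁))).bddAbove
  have hhamiltonian := lowerHamiltonian_zero_le_add hb hσ hg ht₁ ht₂ fun w =>
    (hcompare _ _ w).trans (add_le_add_right (add_le_add_left (le_ciSup hbdd w) (A * s)) _)
  simp only [extremalOperator]
  linarith [(abs_le.1 J.left_time_error_le).2, (abs_le.1 J.right_time_error_le).2]

theorem extremalOperator_nonneg_of_isLocalMaxOn (hK : 0 ≤ K)
    (hb : IsLipschitzCoefficient T C (pairControls b))
    (hσ : IsLipschitzCoefficient T C (pairControls σ))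
    (hg : IsLipschitzCoefficient T Cg (costAtZero f))
    (hgK : ∀ t ∈ Icc 0 T, ∀ x z z' w,
      |costAtZero f t (x, z) w - costAtZero f t (x, z') w| ≤ K * ‖z - z'‖)
    (hu₁ : ContinuousOn (fun z : ℝ × Eucl n => u₁ z.1 z.2) (Icc 0 T ×ˢ univ))
    (hu₂ : ContinuousOn (fun z : ℝ × Eucl n => u₂ z.1 z.2) (Icc 0 T ×ˢ univ))
    (hsub : IsViscositySubsolution T (lowerHamiltonian b σ f) g₁ u₁)
    (hsuper : IsViscositySupersolution T (lowerHamiltonian b σ f) g₂ u₂)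
    (hφ : ContDiff ℝ 3 fun z : ℝ × Eucl n => φ z.1 z.2) (ht₀ : t₀ ∈ Ico 0 T)
    (hmax : IsLocalMaxOn (fun z : ℝ × Eucl n => u₁ z.1 z.2 - u₂ z.1 z.2 - φ z.1 z.2)
      (Icc 0 T ×ˢ univ) (t₀, x₀)) :
    0 ≤ extremalOperator K b σ φ (t₀, x₀) := by
  obtain ⟨A, hA⟩ := exists_isaacsIntegrand_le hK hb hσ hg hgK x₀
  refine nonneg_of_forall_exists_dist_le (A := A + 2) (continuousOn_extremalOperator hb hσ hφ
    (t₀, x₀) ⟨Ico_subset_Icc_self ht₀, mem_univ _⟩) fun s hs hs1 => ?_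
  obtain ⟨κ, hκ, hcoupled⟩ := exists_coupledSuperjets (w₁ := fun t x => u₁ t x - φ t x)
    (w₂ := fun t x => -u₂ t x) (hu₁.sub hφ.continuous.continuousOn) hu₂.neg ht₀
    (by simpa only [← sub_eq_add_neg, sub_right_comm] using hmax) hs hs1
  obtain ⟨δ, hδ, hcompare⟩ := hA s hs hs1 κ hκ
  obtain ⟨J⟩ := hcoupled δ hδ
  exact ⟨(J.t₁, J.x₁), ⟨Ico_subset_Icc_self J.left_time_mem, mem_univ _⟩,
    max_le J.left_time_near (mem_closedBall_iff_norm.2 J.left_space_near),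
    J.extremalOperator_add_nonneg hφ hb hσ hg hsub hsuper (hcompare _ _ _ J)⟩

end Comparison

theorem difference_is_subsolution_general {n d : ℕ} {T : ℝ}
    {U V : Type*} [PseudoMetricSpace U] [CompactSpace U] [Nonempty U]
    [PseudoMetricSpace V] [CompactSpace V] [Nonempty V]
    {b : ℝ → Eucl n → U → V → Eucl n} {σ : ℝ → Eucl n → U → V → Matrix (Fin n) (Fin d) ℝ}
    {f : ℝ → Eucl n → ℝ → Eucl d → U → V → ℝ} {Φ : Eucl n → ℝ}
    (hb_cont : ∀ x, ContinuousOn (fun q : ℝ × U × V => b q.1 x q.2.1 q.2.2) (Icc 0 T ×ˢ univ))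
    (hσ_cont : ∀ x, ContinuousOn (fun q : ℝ × U × V => σ q.1 x q.2.1 q.2.2) (Icc 0 T ×ˢ univ))
    (hbσ_lip : ∃ C > (0 : ℝ), ∀ t ∈ Icc 0 T, ∀ x x' u v,
      ‖b t x u v - b t x' u v‖ + ‖σ t x u v - σ t x' u v‖ ≤ C * ‖x - x'‖)
    (hf_cont : ∀ x y z,
      ContinuousOn (fun q : ℝ × U × V => f q.1 x y z q.2.1 q.2.2) (Icc 0 T ×ˢ univ))
    (hf_lip : ∃ C > (0 : ℝ), ∀ t ∈ Icc 0 T, ∀ x x' y z u v,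
      |f t x y z u v - f t x' y z u v| ≤ C * ‖x - x'‖)
    {K : ℝ} (hK : 0 ≤ K)
    (hKLip : ∀ t ∈ Icc 0 T, ∀ x y y' z z' u v,
      |f t x y z u v - f t x y' z' u v| ≤ K * (|y - y'| + ‖z - z'‖))
    {u₁ u₂ : ℝ → Eucl n → ℝ}
    (hu₁ : ContinuousOn (fun z : ℝ × Eucl n => u₁ z.1 z.2) (Icc 0 T ×ˢ univ))
    (hu₂ : ContinuousOn (fun z : ℝ × Eucl n => u₂ z.1 z.2) (Icc 0 T ×ˢ univ))
    (hsub : IsViscositySubsolution T (lowerHamiltonian b σ f) Φ u₁)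
    (hsuper : IsViscositySupersolution T (lowerHamiltonian b σ f) Φ u₂) :
    IsViscositySubsolution T
      (fun t x y p X => ⨆ u, ⨆ v, (1 / 2) * Matrix.trace (σ t x u v * (σ t x u v)ᵀ * X)
        + ⟪p, b t x u v⟫ + K * |y| + K * ‖rowMul p (σ t x u v)‖)
      (fun _ => 0) (fun t x => u₁ t x - u₂ t x) := by
  obtain ⟨C, hC, hC_lip⟩ := hbσ_lip
  obtain ⟨Cf, hCf, hCf_lip⟩ := hf_lip
  lift C to NNReal using hC.le
  lift Cf to NNReal using hCf.le
  lift K to NNReal using hK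
  have hb : IsLipschitzCoefficient T C (pairControls b) :=
    isLipschitzCoefficient_pairControls hb_cont fun t ht x x' u v => by
      simpa only [dist_eq_norm] using le_of_add_le_of_nonneg_left (hC_lip t ht x x' u v)
        (norm_nonneg _)
  have hσ : IsLipschitzCoefficient T C (pairControls σ) :=
    isLipschitzCoefficient_pairControls hσ_cont fun t ht x x' u v => by
      simpa only [dist_eq_norm] using le_of_add_le_of_nonneg_right (hC_lip t ht x x' u v)
        (norm_nonneg _)
  have hcost (t) (ht : t ∈ Icc 0 T) (x z z' u v) :
      |f t x 0 z u v - f t x 0 z' u v| ≤ K * ‖z - z'‖ := by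
    simpa only [sub_self, abs_zero, zero_add] using hKLip t ht x 0 0 z z' u v
  have hg := isLipschitzCoefficient_costAtZero hf_cont hCf_lip hcost
  refine ⟨fun x => sub_nonpos.2 ((hsub.1 x).trans (hsuper.1 x)), fun φ hφ t₀ ht₀ x₀ hmax => ?_⟩
  exact (extremalOperator_nonneg_of_isLocalMaxOn K.coe_nonneg hb hσ hg
    (fun t ht x z z' w => hcost t ht x z z' w.1 w.2) hu₁ hu₂ hsub hsuper hφ.1 ht₀ hmax).trans
    (add_le_add_right (iSup_extremalIntegrand_le_iSup_iSup K.coe_nonneg hb hσ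
      (Ico_subset_Icc_self ht₀) _ _ _ _) _)

/-- **Lemma 6.1.** If `u₁ ∈ Θ` is a viscosity subsolution and `u₂ ∈ Θ` a viscosity
supersolution of the lower Isaacs equation, and `K` is a Lipschitz constant of
`f(t,x,·,·)`, then `ω := u₁ − u₂` is a viscosity subsolution of
`∂_t ω + sup_{u,v} {½tr(σσᵀD²ω) + Dω·b + K|ω| + K|Dω·σ|} = 0` with `ω(T,·) = 0`. -/
theorem difference_is_subsolution
    {n d : ℕ} (hn : 1 ≤ n) (hd : 1 ≤ d) {T : ℝ} (hT : 0 < T)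
    {U V : Type*} [MetricSpace U] [CompactSpace U] [Nonempty U]
    [MetricSpace V] [CompactSpace V] [Nonempty V]
    (b : ℝ → Eucl n → U → V → Eucl n)
    (σ : ℝ → Eucl n → U → V → Matrix (Fin n) (Fin d) ℝ)
    (f : ℝ → Eucl n → ℝ → Eucl d → U → V → ℝ)
    (Φ : Eucl n → ℝ)
    -- (H4.1)(i): for fixed `x`, `b(·,x,·,·)` and `σ(·,x,·,·)` are continuous in `(t,u,v)`
    (hb_cont : ∀ x : Eucl n, ContinuousOn
      (fun q : ℝ × U × V => b q.1 x q.2.1 q.2.2)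
      (Set.Icc (0 : ℝ) T ×ˢ (Set.univ : Set (U × V))))
    (hσ_cont : ∀ x : Eucl n, ContinuousOn
      (fun q : ℝ × U × V => σ q.1 x q.2.1 q.2.2)
      (Set.Icc (0 : ℝ) T ×ˢ (Set.univ : Set (U × V))))
    -- (H4.1)(ii): `b` and `σ` are Lipschitz in `x`, uniformly in `(t,u,v)`
    (hbσ_lip : ∃ C > (0 : ℝ), ∀ t ∈ Set.Icc (0 : ℝ) T, ∀ (x x' : Eucl n) (u : U) (v : V),
      ‖b t x u v - b t x' u v‖ + ‖σ t x u v - σ t x' u v‖ ≤ C * ‖x - x'‖)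
    -- (H4.2)(i): for fixed `(x,y,z)`, `f(·,x,y,z,·,·)` is continuous in `(t,u,v)`
    (hf_cont : ∀ (x : Eucl n) (y : ℝ) (z : Eucl d), ContinuousOn
      (fun q : ℝ × U × V => f q.1 x y z q.2.1 q.2.2)
      (Set.Icc (0 : ℝ) T ×ˢ (Set.univ : Set (U × V))))
    -- (H4.2): `f` is Lipschitz in `(x,y,z)`, uniformly in `(t,u,v)`
    (hf_lip : ∃ C > (0 : ℝ), ∀ t ∈ Set.Icc (0 : ℝ) T,
      ∀ (x x' : Eucl n) (y y' : ℝ) (z z' : Eucl d) (u : U) (v : V),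
      |f t x y z u v - f t x' y' z' u v| ≤ C * (‖x - x'‖ + |y - y'| + ‖z - z'‖))
    -- (H4.2): `Φ` is Lipschitz
    (hΦ_lip : ∃ C > (0 : ℝ), ∀ x x' : Eucl n, |Φ x - Φ x'| ≤ C * ‖x - x'‖)
    -- `K` is a Lipschitz constant of `f(t,x,·,·)`, uniformly in `(t,x,u,v)`
    (K : ℝ) (hK : 0 ≤ K)
    (hKLip : ∀ t ∈ Set.Icc (0 : ℝ) T, ∀ (x : Eucl n) (y y' : ℝ) (z z' : Eucl d)
      (u : U) (v : V),
      |f t x y z u v - f t x y' z' u v| ≤ K * (|y - y'| + ‖z - z'‖))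
    (u₁ u₂ : ℝ → Eucl n → ℝ)
    (hu₁Θ : MemTheta T u₁) (hu₂Θ : MemTheta T u₂)
    (hsub : IsViscositySubsolution T (lowerHamiltonian b σ f) Φ u₁)
    (hsuper : IsViscositySupersolution T (lowerHamiltonian b σ f) Φ u₂) :
    IsViscositySubsolution T
      (fun t x y p X => ⨆ u : U, ⨆ v : V,
        (1 / 2) * Matrix.trace (σ t x u v * (σ t x u v)ᵀ * X)
          + ⟪p, b t x u v⟫
          + K * |y|
          + K * ‖rowMul p (σ t x u v)‖)
      (fun _ => (0 : ℝ))
      (fun t x => u₁ t x - u₂ t x) :=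
  difference_is_subsolution_general hb_cont hσ_cont hbσ_lip hf_cont
    (hf_lip.imp fun C hC => ⟨hC.1, fun t ht x x' y z u v => by
      simpa using hC.2 t ht x x' y y z z u v⟩)
    hK hKLip hu₁Θ.1 hu₂Θ.1 hsub hsuper
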